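/- arXiv:2312.12043 — 2 statements merged into one kernel-verified Lean document; each statement's English description precedes it below -/
import Mathlib

section
/- Let f_1, …, f_m be E-functions with rational coefficients such that 1, f_1, …, f_m are linearly independent over ℂ(z). Let N be sufficiently large with respect to f_1, …, f_m, let 0 < η ≤ 1/(3(N+m−1)), let M be sufficiently large with respect to f_1, …, f_m, N, η, and set K = ⌊(ω−η)M/θ⌋. Then there exist polynomials P_κ(z) of degree less than M, for κ ∈ Ω, not all zero, such that ord_0(P_κ(z) + Σ_{j=1}^m P_{κ−e_j}(z) f_j(z)) ≥ K for every κ ∈ Θ, and such that, writing P_κ(z) = Σ_{ν=0}^{M−1} (π_{κ,ν}/ν!) z^ν, one has π_{κ,ν} ∈ ℤ and |π_{κ,ν}| ≤ C₀^{ωM/η} for all κ ∈ Ω and 0 ≤ ν ≤ M−1, where C₀ is a positive constant depending only on f_1, …, f_m. -/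
open Polynomial

noncomputable section

/-- The entire function `f(z) = ∑ aₙ zⁿ/n!` attached to a sequence of rational
Taylor coefficients. -/
def Efun (a : ℕ → ℚ) : ℂ → ℂ := fun z => ∑' n : ℕ, (a n : ℂ) * z ^ n / n.factorial

/-- A polynomial with coefficients in `ℚ̄` (the algebraic numbers inside `ℂ`). -/
def AlgCoeffs (p : Polynomial ℂ) : Prop := ∀ n, IsAlgebraic ℚ (p.coeff n)

/-- `f` is a solution of a nonzero linear differential equation with coefficients
in `ℚ̄(z)` (equivalently, after clearing denominators, in `ℚ̄[z]`). -/
def SatisfiesAlgODE (f : ℂ → ℂ) : Prop :=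
  ∃ (r : ℕ) (p : Fin (r + 1) → Polynomial ℂ),
    (∀ j, AlgCoeffs (p j)) ∧ (∃ j, p j ≠ 0) ∧
      ∀ z : ℂ, ∑ j : Fin (r + 1), (p j).eval z * iteratedDeriv (j : ℕ) f z = 0

/-- `∑ aₙ zⁿ/n!` is an E-function in the strict sense with rational coefficients. -/
def IsEFunQ (a : ℕ → ℚ) : Prop :=
  SatisfiesAlgODE (Efun a) ∧
    ∃ C : ℝ, 0 < C ∧ (∀ n, |(a n : ℝ)| ≤ C ^ (n + 1)) ∧
      ∃ d : ℕ → ℕ, (∀ n, 1 ≤ d n ∧ (d n : ℝ) ≤ C ^ (n + 1)) ∧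
        ∀ n, ∀ m ≤ n, ∃ k : ℤ, (d n : ℚ) * a m = (k : ℚ)
/-- The weight `|κ| = κ₁ + … + κ_m` of a multi-index. -/
def wt {m : ℕ} (κ : Fin m → ℕ) : ℕ := ∑ j, κ j

/-- `κ ∈ Ω`, i.e. `N - 1 ≤ |κ| ≤ N`. -/
def inOmega (m N : ℕ) (κ : Fin m → ℕ) : Prop := N - 1 ≤ wt κ ∧ wt κ ≤ N

/-- `κ ∈ Θ`, i.e. `|κ| = N`. -/
def inTheta (m N : ℕ) (κ : Fin m → ℕ) : Prop := wt κ = N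

/-- `κ - e_j` (only meaningful when `κ j ≥ 1`; guarded at use sites). -/
def sub1 {m : ℕ} (κ : Fin m → ℕ) (j : Fin m) : Fin m → ℕ :=
  Function.update κ j (κ j - 1)

/-- `κ + e_j`. -/
def add1 {m : ℕ} (κ : Fin m → ℕ) (j : Fin m) : Fin m → ℕ :=
  Function.update κ j (κ j + 1)

/-- `ω = #Ω = C(N+m-2, m-1) + C(N+m-1, m-1)`. -/
def omegaCard (m N : ℕ) : ℕ := (N + m - 2).choose (m - 1) + (N + m - 1).choose (m - 1)

/-- `θ = #Θ = C(N+m-1, m-1)`. -/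
def thetaCard (m N : ℕ) : ℕ := (N + m - 1).choose (m - 1)

/-- The functions `1, f₁, …, f_m` are linearly independent over `ℂ(z)` (equivalently,
over `ℂ[z]`). -/
def OneFLinIndep (m : ℕ) (f : Fin m → ℂ → ℂ) : Prop :=
  ∀ (Q0 : Polynomial ℂ) (Q : Fin m → Polynomial ℂ),
    (∀ z : ℂ, Q0.eval z + ∑ j : Fin m, (Q j).eval z * f j z = 0) →
      Q0 = 0 ∧ ∀ j, Q j = 0

/-- The Siegel construction (Lemma 4.1): the polynomials `P_κ` (`κ ∈ Ω`, extended by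
`0` off `Ω`) have degree `< M`, are not all zero, and for every `κ ∈ Θ` the remainder
`P_κ + ∑_j P_{κ-e_j} f_j` vanishes at `0` with order at least `K`. -/
def SiegelP (m N M K : ℕ) (f : Fin m → ℂ → ℂ) (P : (Fin m → ℕ) → Polynomial ℂ) : Prop :=
  (∀ κ, ¬ inOmega m N κ → P κ = 0) ∧
  (∀ κ, (P κ).degree < (M : WithBot ℕ)) ∧
  (∃ κ, P κ ≠ 0) ∧
  ∀ κ, inTheta m N κ → ∀ l < K, iteratedDeriv l
    (fun z => (P κ).eval z +
      ∑ j : Fin m, (if κ j = 0 then 0 else (P (sub1 κ j)).eval z * f j z)) 0 = 0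

/-!
The requirement `ord₀(P_κ + ∑ⱼ P_{κ-eⱼ} fⱼ) ≥ K` for `κ ∈ Θ` amounts to the vanishing of `θK`
rational linear forms in the `ωM` unknown integers `π_{κ,ν}`. Let `C ≥ 1` be a growth constant
common to all `fⱼ`. Multiplied by a common denominator of the Taylor coefficients involved, these
forms have integer coefficients bounded by `(m+1) B^K` with `B = 2 C^{m+1}`. Since `θK ≤ (ω-η)M`,
the exponent `θK/(ωM-θK)` in Siegel's lemma is at most `ω/η`, and since `ω ≤ 2θ`, one has `K ≤ 2M`.
For large `M` the remaining factor `ω(m+1)M` is at most `2^M`, so that `C₀ = 2B²` works.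
-/

section SiegelLemma

attribute [local instance] Matrix.seminormedAddCommGroup

theorem exists_ne_zero_int_vec_abs_le {α β : Type*} [Fintype α] [Fintype β] (A : Matrix α β ℤ)
    {X : ℝ} (hX : 1 ≤ X) (hA : ∀ i j, |(A i j : ℝ)| ≤ X)
    (hcard : Fintype.card α < Fintype.card β) :
    ∃ t : β → ℤ, t ≠ 0 ∧ A.mulVec t = 0 ∧ ∀ j, |(t j : ℝ)| ≤ (Fintype.card β * X) ^
      ((Fintype.card α : ℝ) / (Fintype.card β - Fintype.card α)) := by
  rcases isEmpty_or_nonempty α with hα | hα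
  · obtain ⟨j₀⟩ := Fintype.card_pos_iff.1 (Nat.zero_lt_of_lt hcard)
    exact ⟨1, fun h => one_ne_zero (congrFun h j₀), Subsingleton.elim _ _, by simp⟩
  obtain ⟨t, ht_ne, ht_zero, ht_norm⟩ :=
    Int.Matrix.exists_ne_zero_int_vec_norm_le A hcard Fintype.card_pos
  have hA_norm : ‖A‖ ≤ X :=
    (Matrix.norm_le_iff (zero_le_one.trans hX)).2 fun i j => by
      simpa only [Int.norm_eq_abs] using hA i j
  have hexp : (0 : ℝ) ≤ Fintype.card α / (Fintype.card β - Fintype.card α) :=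
    div_nonneg (Nat.cast_nonneg _) (sub_nonneg.2 (by exact_mod_cast hcard.le))
  refine ⟨t, ht_ne, ht_zero, fun j => ?_⟩
  calc |(t j : ℝ)| = ‖t j‖ := (Int.norm_eq_abs _).symm
    _ ≤ ‖t‖ := norm_le_pi_norm t j
    _ ≤ _ := ht_norm
    _ ≤ _ := by gcongr; exact max_le hX hA_norm

end SiegelLemma

theorem eq_sum_smul_single_of_forall_notMem_eq_zero {ι R : Type*} [DecidableEq ι] [Semiring R]
    {S : Finset ι} {p : ι → R} (hp : ∀ i ∉ S, p i = 0) : p = ∑ i ∈ S, p i • Pi.single i 1 := by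
  ext k
  simp only [Finset.sum_apply, Pi.smul_apply, Pi.single_apply, smul_eq_mul, mul_ite, mul_one,
    mul_zero, Finset.sum_ite_eq]
  split_ifs with hk
  exacts [rfl, hp k hk]

theorem exists_int_solution_of_card_lt {ι ρ : Type*} [DecidableEq ι]
    (Λ : ρ → (ι → ℤ) →ₗ[ℤ] ℚ) (S : Finset ι) (T : Finset ρ) {X : ℝ} (hX : 1 ≤ X)
    (hΛ : ∀ r ∈ T, ∃ D : ℕ, D ≠ 0 ∧ ∀ i ∈ S,
      ∃ z : ℤ, (D : ℚ) * Λ r (Pi.single i 1) = z ∧ |(z : ℝ)| ≤ X)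
    (hcard : T.card < S.card) :
    ∃ p : ι → ℤ, p ≠ 0 ∧ (∀ i ∉ S, p i = 0) ∧ (∀ r ∈ T, Λ r p = 0) ∧
      ∀ i, |(p i : ℝ)| ≤ (S.card * X) ^ ((T.card : ℝ) / (S.card - T.card)) := by
  choose! D hD A hA hAX using hΛ
  obtain ⟨t, ht_ne, ht_zero, ht_le⟩ := exists_ne_zero_int_vec_abs_le
    (Matrix.of fun (r : T) (i : S) => A r i) hX (fun r i => hAX r r.2 i i.2)
    (by simpa only [Fintype.card_coe] using hcard)
  simp only [Fintype.card_coe] at ht_le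
  set p : ι → ℤ := Function.extend Subtype.val t 0
  have hp_coe (i : S) : p i = t i := Subtype.val_injective.extend_apply t 0 i
  have hp_zero (i : ι) (hi : i ∉ S) : p i = 0 :=
    Function.extend_apply' _ _ _ fun ⟨k, hk⟩ => hi (hk ▸ k.2)
  refine ⟨p, fun h => ht_ne (funext fun i => by simp [← hp_coe, h]), hp_zero, fun r hr => ?_,
    fun i => ?_⟩
  · refine (mul_eq_zero.1 ?_).resolve_left (Nat.cast_ne_zero.2 (hD r hr) : (D r : ℚ) ≠ 0)
    calc (D r : ℚ) * Λ r p = ∑ i ∈ S, p i * (D r * Λ r (Pi.single i 1)) := by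
          conv_lhs => rw [eq_sum_smul_single_of_forall_notMem_eq_zero hp_zero, map_sum,
            Finset.mul_sum]
          exact Finset.sum_congr rfl fun i _ => by rw [map_zsmul, zsmul_eq_mul]; ring
      _ = ∑ i ∈ S, ((A r i * p i : ℤ) : ℚ) :=
          Finset.sum_congr rfl fun i hi => by rw [hA r hr i hi]; push_cast; ring
      _ = ((∑ i : S, A r i * t i : ℤ) : ℚ) := by
          rw [← Int.cast_sum, ← Finset.sum_coe_sort]; simp only [hp_coe]
      _ = 0 := by exact_mod_cast congrFun ht_zero ⟨r, hr⟩
  · by_cases hi : i ∈ S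
    · simpa only [← hp_coe] using ht_le ⟨i, hi⟩
    · rw [hp_zero i hi, Int.cast_zero, abs_zero]
      positivity

theorem iteratedDeriv_eval_zero {𝕜 : Type*} [NontriviallyNormedField 𝕜] (P : 𝕜[X]) (n : ℕ) :
    iteratedDeriv n (fun z => P.eval z) 0 = n.factorial * P.coeff n := by
  have hiter : iteratedDeriv n (fun z => P.eval z) = fun z => (derivative^[n] P).eval z := by
    induction n with
    | zero => simp
    | succ n ih => ext z; simp [iteratedDeriv_succ, ih, Function.iterate_succ_apply']
  simp [hiter, ← coeff_zero_eq_eval_zero, coeff_iterate_derivative, Nat.descFactorial_self]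

theorem iteratedDeriv_eq_of_hasFPowerSeriesAt_ofScalars {𝕜 : Type*} [NontriviallyNormedField 𝕜]
    [CompleteSpace 𝕜] [CharZero 𝕜] {f : 𝕜 → 𝕜} {x : 𝕜} {c : ℕ → 𝕜}
    (hf : HasFPowerSeriesAt f (.ofScalars 𝕜 fun n => c n / n.factorial) x) (n : ℕ) :
    iteratedDeriv n f x = c n := by
  have hcoeff := congrArg (fun p => p.coeff n)
    (hf.analyticAt.hasFPowerSeriesAt.eq_formalMultilinearSeries hf)
  simp only [FormalMultilinearSeries.coeff_ofScalars] at hcoeff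
  exact (div_left_inj' (Nat.cast_ne_zero.2 n.factorial_ne_zero)).1 hcoeff

/-- Conditions (ii) and (iii) in the definition of an E-function, for one constant `C`: the
coefficients and their common denominators grow at most geometrically. -/
structure HasGeometricGrowth (C : ℝ) (a : ℕ → ℚ) : Prop where
  abs_le : ∀ n, |(a n : ℝ)| ≤ C ^ (n + 1)
  exists_den : ∀ n, ∃ d : ℕ, d ≠ 0 ∧ (d : ℝ) ≤ C ^ (n + 1) ∧ ∀ k ≤ n, ∃ z : ℤ, (d : ℚ) * a k = z

theorem IsEFunQ.exists_hasGeometricGrowth {a : ℕ → ℚ} (ha : IsEFunQ a) :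
    ∃ C, HasGeometricGrowth C a := by
  obtain ⟨-, C, -, habs, d, hd, hint⟩ := ha
  exact ⟨C, habs, fun n => ⟨d n, Nat.one_le_iff_ne_zero.1 (hd n).1, (hd n).2, hint n⟩⟩

namespace HasGeometricGrowth

variable {a : ℕ → ℚ} {C C' : ℝ}

theorem nonneg (ha : HasGeometricGrowth C a) : 0 ≤ C := by
  simpa using (abs_nonneg _).trans (ha.abs_le 0)

theorem mono (ha : HasGeometricGrowth C a) (hC : C ≤ C') : HasGeometricGrowth C' a := by
  have hpow (n : ℕ) : C ^ (n + 1) ≤ C' ^ (n + 1) := pow_le_pow_left₀ ha.nonneg hC _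
  refine ⟨fun n => (ha.abs_le n).trans (hpow n), fun n => ?_⟩
  obtain ⟨d, hd_ne, hd_le, hint⟩ := ha.exists_den n
  exact ⟨d, hd_ne, hd_le.trans (hpow n), hint⟩

theorem summable (ha : HasGeometricGrowth C a) (z : ℂ) :
    Summable fun n : ℕ => (a n : ℂ) * z ^ n / n.factorial := by
  refine .of_norm_bounded ((Real.summable_pow_div_factorial (C * ‖z‖)).mul_left C) fun n => ?_
  calc ‖(a n : ℂ) * z ^ n / n.factorial‖ = |(a n : ℝ)| * ‖z‖ ^ n / n.factorial := by simp
    _ ≤ C ^ (n + 1) * ‖z‖ ^ n / n.factorial := by gcongr; exact ha.abs_le n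
    _ = C * ((C * ‖z‖) ^ n / n.factorial) := by ring

theorem hasFPowerSeriesAt_Efun (ha : HasGeometricGrowth C a) :
    HasFPowerSeriesAt (Efun a) (.ofScalars ℂ fun n => (a n : ℂ) / n.factorial) 0 := by
  refine hasFPowerSeriesAt_iff.2 (.of_forall fun z => ?_)
  convert! (ha.summable z).hasSum using 2 with n
  · rw [FormalMultilinearSeries.coeff_ofScalars, smul_eq_mul]
    ring
  · rw [zero_add]; rfl

theorem exists_common_den {ι : Type*} [Fintype ι] {a : ι → ℕ → ℚ}
    (ha : ∀ j, HasGeometricGrowth C (a j)) (n : ℕ) :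
    ∃ D : ℕ, D ≠ 0 ∧ (D : ℝ) ≤ (C ^ (n + 1)) ^ Fintype.card ι ∧
      ∀ j, ∀ k ≤ n, ∃ z : ℤ, (D : ℚ) * a j k = z := by
  classical
  choose d hd_ne hd_le hint using fun j => (ha j).exists_den n
  refine ⟨∏ j, d j, Finset.prod_ne_zero_iff.2 fun j _ => hd_ne j, ?_, fun j k hk => ?_⟩
  · calc ((∏ j, d j : ℕ) : ℝ) = ∏ j, (d j : ℝ) := Nat.cast_prod _ _
      _ ≤ ∏ _j : ι, C ^ (n + 1) :=
          Finset.prod_le_prod (fun j _ => Nat.cast_nonneg _) fun j _ => hd_le j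
      _ = (C ^ (n + 1)) ^ Fintype.card ι := by rw [Finset.prod_const, Finset.card_univ]
  · obtain ⟨z, hz⟩ := hint j k hk
    refine ⟨(∏ i ∈ Finset.univ.erase j, d i : ℕ) * z, ?_⟩
    rw [← Finset.prod_erase_mul _ _ (Finset.mem_univ j)]
    push_cast
    rw [mul_assoc, hz]

end HasGeometricGrowth

theorem exists_one_le_forall_hasGeometricGrowth {ι : Type*} [Finite ι] {a : ι → ℕ → ℚ}
    (ha : ∀ j, ∃ C, HasGeometricGrowth C (a j)) :
    ∃ C, 1 ≤ C ∧ ∀ j, HasGeometricGrowth C (a j) := by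
  choose C hC using ha
  obtain ⟨B, hB⟩ := (Set.finite_range C).bddAbove
  exact ⟨max 1 B, le_max_left _ _, fun j =>
    (hC j).mono ((hB (Set.mem_range_self j)).trans (le_max_right _ _))⟩

/-- The multi-indices of weight `n`; for `n = N` this is `Θ`. -/
def weightFinset (m n : ℕ) : Finset (Fin m → ℕ) := Finset.piAntidiag Finset.univ n

/-- `Ω` as a finite set. -/
def omegaFinset (m N : ℕ) : Finset (Fin m → ℕ) := weightFinset m (N - 1) ∪ weightFinset m N

section MultiIndices

variable {m N : ℕ} {κ : Fin m → ℕ}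

theorem mem_weightFinset : κ ∈ weightFinset m N ↔ wt κ = N := by
  simp [weightFinset, wt]

theorem mem_omegaFinset : κ ∈ omegaFinset m N ↔ inOmega m N κ := by
  simp only [omegaFinset, Finset.mem_union, mem_weightFinset, inOmega]
  omega

theorem card_weightFinset (hm : 1 ≤ m) (n : ℕ) :
    (weightFinset m n).card = (n + m - 1).choose (m - 1) := by
  have hcard := Finset.card_finsuppAntidiag_nat_eq_choose (s := (Finset.univ : Finset (Fin m))) n
  rw [Finset.finsuppAntidiag, Finset.card_map, Finset.card_attach, Finset.card_fin] at hcard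
  rw [weightFinset, hcard, add_comm m n, ← Nat.choose_symm (by omega)]
  congr 1
  omega

theorem card_omegaFinset (hm : 1 ≤ m) (hN : 1 ≤ N) : (omegaFinset m N).card = omegaCard m N := by
  have hdisj : Disjoint (weightFinset m (N - 1)) (weightFinset m N) := by
    simp only [Finset.disjoint_left, mem_weightFinset]
    omega
  rw [omegaFinset, Finset.card_union_of_disjoint hdisj, card_weightFinset hm,
    card_weightFinset hm, omegaCard, show N - 1 + m - 1 = N + m - 2 by omega]

theorem thetaCard_pos (hm : 1 ≤ m) : 0 < thetaCard m N :=
  Nat.choose_pos (by omega)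

theorem omegaCard_pos (hm : 1 ≤ m) : 0 < omegaCard m N :=
  Nat.add_pos_right _ (thetaCard_pos hm)

theorem omegaCard_le_two_mul_thetaCard : omegaCard m N ≤ 2 * thetaCard m N := by
  rw [two_mul]
  exact Nat.add_le_add_right (Nat.choose_le_choose _ (by omega)) _

theorem le_two_mul_of_thetaCard_mul_lt {K M : ℕ} (h : thetaCard m N * K < omegaCard m N * M) :
    K ≤ 2 * M := by
  refine (Nat.lt_of_mul_lt_mul_left (a := thetaCard m N) (h.trans_le ?_)).le
  calc omegaCard m N * M ≤ 2 * thetaCard m N * M :=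
        Nat.mul_le_mul_right M omegaCard_le_two_mul_thetaCard
    _ = thetaCard m N * (2 * M) := by ring

end MultiIndices

/-- The `l`-th derivative at `0` of `P_κ + ∑_j P_{κ-e_j} f_j`, as a linear form in the unknowns
`p (κ, ν) = π_{κ,ν}`, where `f_j = ∑ a_j(n) zⁿ/n!` and `P_κ = ∑ π_{κ,ν} z^ν/ν!`. -/
def remainderForm {m : ℕ} (a : Fin m → ℕ → ℚ) (κ : Fin m → ℕ) (l : ℕ) :
    ((Fin m → ℕ) × ℕ → ℤ) →ₗ[ℤ] ℚ where
  toFun p := p (κ, l) + ∑ j with κ j ≠ 0, ∑ ν ∈ Finset.range (l + 1),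
    (l.choose ν : ℚ) * p (sub1 κ j, ν) * a j (l - ν)
  map_add' p q := by
    simp only [Pi.add_apply, Int.cast_add, mul_add, add_mul, Finset.sum_add_distrib]
    ring
  map_smul' c p := by
    simp only [Pi.smul_apply, smul_eq_mul, Int.cast_mul, zsmul_eq_mul, RingHom.id_apply, mul_add,
      Finset.mul_sum, mul_assoc, mul_left_comm]

section RemainderForm

variable {m : ℕ} {a : Fin m → ℕ → ℚ}

theorem remainderForm_apply (κ : Fin m → ℕ) (l : ℕ) (p : (Fin m → ℕ) × ℕ → ℤ) :
    remainderForm a κ l p = p (κ, l) + ∑ j with κ j ≠ 0, ∑ ν ∈ Finset.range (l + 1),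
      (l.choose ν : ℚ) * p (sub1 κ j, ν) * a j (l - ν) :=
  rfl

theorem exists_int_eq_mul_remainderForm {D l : ℕ}
    (hD : ∀ j, ∀ k ≤ l, ∃ z : ℤ, (D : ℚ) * a j k = z) (κ : Fin m → ℕ)
    (p : (Fin m → ℕ) × ℕ → ℤ) :
    ∃ z : ℤ, (D : ℚ) * remainderForm a κ l p = z := by
  suffices h : (D : ℚ) * remainderForm a κ l p ∈ (Int.castRingHom ℚ).range by
    exact h.imp fun z hz => hz.symm
  simp only [remainderForm_apply, mul_add, Finset.mul_sum]
  refine add_mem (mul_mem (natCast_mem _ _) (intCast_mem _ _))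
    (sum_mem fun j _ => sum_mem fun ν _ => ?_)
  obtain ⟨z, hz⟩ := hD j (l - ν) (Nat.sub_le _ _)
  rw [mul_left_comm, hz]
  exact mul_mem (mul_mem (natCast_mem _ _) (intCast_mem _ _)) (intCast_mem _ _)

theorem abs_remainderForm_le {C Y : ℝ} (hC : 1 ≤ C) (ha : ∀ j n, |(a j n : ℝ)| ≤ C ^ (n + 1))
    {p : (Fin m → ℕ) × ℕ → ℤ} (hp : ∀ i, |(p i : ℝ)| ≤ Y) (κ : Fin m → ℕ) (l : ℕ) :
    |(remainderForm a κ l p : ℝ)| ≤ (m + 1) * (2 * C) ^ (l + 1) * Y := by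
  have hY : 0 ≤ Y := (abs_nonneg _).trans (hp (κ, l))
  have hconv (j : Fin m) : |∑ ν ∈ Finset.range (l + 1),
      (l.choose ν : ℝ) * p (sub1 κ j, ν) * a j (l - ν)| ≤ (2 * C) ^ (l + 1) * Y := by
    calc _ ≤ ∑ ν ∈ Finset.range (l + 1), (l.choose ν : ℝ) * Y * C ^ (l + 1) := by
          refine Finset.abs_sum_le_sum_abs _ _ |>.trans (Finset.sum_le_sum fun ν _ => ?_)
          rw [abs_mul, abs_mul, Nat.abs_cast]
          gcongr
          · exact hp _
          · exact (ha j _).trans (pow_le_pow_right₀ hC (by omega))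
      _ = 2 ^ l * Y * C ^ (l + 1) := by
          rw [← Finset.sum_mul, ← Finset.sum_mul, ← Nat.cast_sum, Nat.sum_range_choose]
          push_cast
          rfl
      _ ≤ 2 ^ (l + 1) * Y * C ^ (l + 1) := by gcongr <;> norm_num
      _ = (2 * C) ^ (l + 1) * Y := by ring
  have hY_le : Y ≤ (2 * C) ^ (l + 1) * Y :=
    le_mul_of_one_le_left hY (one_le_pow₀ (by linarith))
  rw [remainderForm_apply]
  push_cast
  calc _ ≤ |(p (κ, l) : ℝ)| + ∑ j with κ j ≠ 0, |∑ ν ∈ Finset.range (l + 1),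
        (l.choose ν : ℝ) * p (sub1 κ j, ν) * a j (l - ν)| :=
        (abs_add_le _ _).trans (add_le_add_right (Finset.abs_sum_le_sum_abs _ _) _)
    _ ≤ |(p (κ, l) : ℝ)| + ∑ j, |∑ ν ∈ Finset.range (l + 1),
        (l.choose ν : ℝ) * p (sub1 κ j, ν) * a j (l - ν)| := by
        gcongr
        exact Finset.filter_subset _ _
    _ ≤ (2 * C) ^ (l + 1) * Y + ∑ _j : Fin m, (2 * C) ^ (l + 1) * Y :=
        add_le_add ((hp _).trans hY_le) (Finset.sum_le_sum fun j _ => hconv j)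
    _ = (m + 1) * (2 * C) ^ (l + 1) * Y := by
        rw [Finset.sum_const, Finset.card_fin, nsmul_eq_mul]
        ring

theorem HasGeometricGrowth.exists_den_remainderForm_single {C : ℝ} (hC : 1 ≤ C)
    (ha : ∀ j, HasGeometricGrowth C (a j)) (κ : Fin m → ℕ) (l : ℕ) :
    ∃ D : ℕ, D ≠ 0 ∧ ∀ i, ∃ z : ℤ, (D : ℚ) * remainderForm a κ l (Pi.single i 1) = z ∧
      |(z : ℝ)| ≤ (m + 1) * (2 * C ^ (m + 1)) ^ (l + 1) := by
  obtain ⟨D, hD_ne, hD_le, hD_int⟩ := HasGeometricGrowth.exists_common_den ha l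
  rw [Fintype.card_fin] at hD_le
  refine ⟨D, hD_ne, fun i => ?_⟩
  obtain ⟨z, hz⟩ := exists_int_eq_mul_remainderForm hD_int κ (Pi.single i 1)
  refine ⟨z, hz, ?_⟩
  have hsingle (k : (Fin m → ℕ) × ℕ) :
      |((Pi.single i 1 : (Fin m → ℕ) × ℕ → ℤ) k : ℝ)| ≤ 1 := by
    rw [Pi.single_apply]
    split_ifs <;> simp
  calc |(z : ℝ)| = D * |(remainderForm a κ l (Pi.single i 1) : ℝ)| := by
        rw [← Nat.abs_cast D, ← abs_mul]
        exact_mod_cast congrArg (fun q : ℚ => |(q : ℝ)|) hz.symm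
    _ ≤ (C ^ (l + 1)) ^ m * ((m + 1) * (2 * C) ^ (l + 1) * 1) := by
        gcongr
        exact abs_remainderForm_le hC (fun j => (ha j).abs_le) hsingle κ l
    _ = (m + 1) * (2 * C ^ (m + 1)) ^ (l + 1) := by ring

theorem HasGeometricGrowth.iteratedDeriv_remainder {C : ℝ} (ha : ∀ j, HasGeometricGrowth C (a j))
    {P : (Fin m → ℕ) → ℂ[X]} {p : (Fin m → ℕ) × ℕ → ℤ}
    (hP : ∀ κ ν, (P κ).coeff ν = p (κ, ν) / ν.factorial) (κ : Fin m → ℕ) (l : ℕ) :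
    iteratedDeriv l (fun z => (P κ).eval z +
      ∑ j, (if κ j = 0 then 0 else (P (sub1 κ j)).eval z * Efun (a j) z)) 0 =
      (remainderForm a κ l p : ℂ) := by
  have hpoly (Q : ℂ[X]) : ContDiffAt ℂ l (fun z => Q.eval z) 0 := by
    simpa using (Q.contDiff_aeval (𝕜 := ℂ) l).contDiffAt
  have hfun (j : Fin m) : ContDiffAt ℂ l (Efun (a j)) 0 :=
    (ha j).hasFPowerSeriesAt_Efun.analyticAt.contDiffAt
  have hderiv (κ : Fin m → ℕ) (ν : ℕ) : iteratedDeriv ν (fun z => (P κ).eval z) 0 = p (κ, ν) := by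
    rw [iteratedDeriv_eval_zero, hP, mul_div_cancel₀ _ (Nat.cast_ne_zero.2 ν.factorial_ne_zero)]
  simp only [← ite_not (p := κ _ = 0), ← Finset.sum_filter]
  rw [iteratedDeriv_fun_add (hpoly _) (ContDiffAt.sum fun j _ => (hpoly _).mul (hfun j)),
    iteratedDeriv_fun_sum fun j _ => (hpoly _).mul (hfun j), remainderForm_apply, hderiv]
  push_cast
  congr 1
  refine Finset.sum_congr rfl fun j _ => ?_
  rw [iteratedDeriv_fun_mul (hpoly _) (hfun j)]
  simp only [hderiv,
    iteratedDeriv_eq_of_hasFPowerSeriesAt_ofScalars (ha j).hasFPowerSeriesAt_Efun]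

end RemainderForm

/-- The polynomial `∑_{ν<M} (u ν / ν!) z^ν`, whose Taylor coefficients at `0` are prescribed. -/
def taylorPoly (M : ℕ) (u : ℕ → ℤ) : ℂ[X] :=
  PowerSeries.trunc M (.mk fun ν => (u ν : ℂ) / ν.factorial)

theorem coeff_taylorPoly {M : ℕ} {u : ℕ → ℤ} (hu : ∀ ν, M ≤ ν → u ν = 0) (ν : ℕ) :
    (taylorPoly M u).coeff ν = u ν / ν.factorial := by
  rw [taylorPoly, PowerSeries.coeff_trunc, PowerSeries.coeff_mk]
  split_ifs with hν
  · rfl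
  · simp [hu ν (not_lt.1 hν)]

theorem HasGeometricGrowth.siegelP_taylorPoly {m N M K : ℕ} {a : Fin m → ℕ → ℚ} {C : ℝ}
    (ha : ∀ j, HasGeometricGrowth C (a j)) {p : (Fin m → ℕ) × ℕ → ℤ} (hp : p ≠ 0)
    (hsupp : ∀ i ∉ omegaFinset m N ×ˢ Finset.range M, p i = 0)
    (hker : ∀ r ∈ weightFinset m N ×ˢ Finset.range K, remainderForm a r.1 r.2 p = 0) :
    SiegelP m N M K (fun j => Efun (a j)) fun κ => taylorPoly M fun ν => p (κ, ν) := by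
  have hcoeff (κ : Fin m → ℕ) (ν : ℕ) :
      (taylorPoly M fun ν => p (κ, ν)).coeff ν = p (κ, ν) / ν.factorial :=
    coeff_taylorPoly (fun ν hν => hsupp _ (by simp [hν])) ν
  refine ⟨fun κ hκ => ?_, fun κ => PowerSeries.degree_trunc_lt _ _, ?_, fun κ hκ l hl => ?_⟩
  · ext ν
    simp [hcoeff, hsupp (κ, ν) (by simp [mem_omegaFinset, hκ])]
  · obtain ⟨⟨κ, ν⟩, hκν⟩ := Function.ne_iff.1 hp
    refine ⟨κ, fun h => hκν ?_⟩
    simpa [h, Nat.factorial_ne_zero] using (hcoeff κ ν).symm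
  · rw [HasGeometricGrowth.iteratedDeriv_remainder ha hcoeff,
      hker (κ, l) (by simpa [mem_weightFinset, hl] using! hκ), Rat.cast_zero]

theorem HasGeometricGrowth.exists_siegelP {m N M K : ℕ} (hm : 1 ≤ m) (hN : 1 ≤ N)
    {a : Fin m → ℕ → ℚ} {C : ℝ} (hC : 1 ≤ C) (ha : ∀ j, HasGeometricGrowth C (a j))
    (hK : thetaCard m N * K < omegaCard m N * M) :
    ∃ (P : (Fin m → ℕ) → ℂ[X]) (pi : (Fin m → ℕ) → ℕ → ℤ),
      SiegelP m N M K (fun j => Efun (a j)) P ∧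
      ∀ κ ν, (P κ).coeff ν = pi κ ν / ν.factorial ∧
        |(pi κ ν : ℝ)| ≤ (omegaCard m N * M * ((m + 1) * (2 * C ^ (m + 1)) ^ K)) ^
          ((thetaCard m N * K : ℝ) / (omegaCard m N * M - thetaCard m N * K)) := by
  have hB : 1 ≤ 2 * C ^ (m + 1) := by linarith [one_le_pow₀ (n := m + 1) hC]
  have hX : 1 ≤ (m + 1) * (2 * C ^ (m + 1)) ^ K :=
    one_le_mul_of_one_le_of_one_le (by simp) (one_le_pow₀ hB)
  have hcols : (omegaFinset m N ×ˢ Finset.range M).card = omegaCard m N * M := by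
    rw [Finset.card_product, card_omegaFinset hm hN, Finset.card_range]
  have hrows : (weightFinset m N ×ˢ Finset.range K).card = thetaCard m N * K := by
    rw [Finset.card_product, card_weightFinset hm, Finset.card_range, thetaCard]
  obtain ⟨p, hp_ne, hp_supp, hp_ker, hp_le⟩ := exists_int_solution_of_card_lt
    (fun r : (Fin m → ℕ) × ℕ => remainderForm a r.1 r.2)
    (omegaFinset m N ×ˢ Finset.range M) (weightFinset m N ×ˢ Finset.range K) hX
    (fun r hr => by
      obtain ⟨D, hD_ne, hD⟩ := HasGeometricGrowth.exists_den_remainderForm_single hC ha r.1 r.2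
      have hr_lt : r.2 < K := Finset.mem_range.1 (Finset.mem_product.1 hr).2
      refine ⟨D, hD_ne, fun i _ => (hD i).imp fun z hz => ⟨hz.1, hz.2.trans ?_⟩⟩
      gcongr
      exact hr_lt)
    (by rwa [hcols, hrows])
  rw [hcols, hrows] at hp_le
  push_cast at hp_le
  exact ⟨_, fun κ ν => p (κ, ν), HasGeometricGrowth.siegelP_taylorPoly ha hp_ne hp_supp hp_ker,
    fun κ ν => ⟨coeff_taylorPoly (fun ν hν => hp_supp _ (by simp [hν])) ν, hp_le (κ, ν)⟩⟩

theorem mul_floor_div_le_max {θ : ℝ} (hθ : 0 < θ) (x : ℝ) : θ * ⌊x / θ⌋₊ ≤ max 0 x := by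
  rcases le_total 0 x with hx | hx
  · exact ((le_div_iff₀' hθ).1 (Nat.floor_le (div_nonneg hx hθ.le))).trans (le_max_right _ _)
  · simp [Nat.floor_of_nonpos (div_nonpos_of_nonpos_of_nonneg hx hθ.le)]

theorem lt_mul_of_le_max_zero_sub_mul {R ω η M : ℝ} (hω : 0 < ω) (hη : 0 < η) (hM : 0 < M)
    (hR : R ≤ max 0 ((ω - η) * M)) : R < ω * M :=
  hR.trans_lt (max_lt (mul_pos hω hM) (mul_lt_mul_of_pos_right (sub_lt_self ω hη) hM))

theorem div_mul_sub_le_div {R ω η M : ℝ} (hω : 0 < ω) (hη : 0 < η) (hM : 0 < M)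
    (hR : R ≤ max 0 ((ω - η) * M)) : R / (ω * M - R) ≤ ω / η := by
  rw [div_le_div_iff₀ (sub_pos.2 (lt_mul_of_le_max_zero_sub_mul hω hη hM hR)) hη]
  rcases le_max_iff.1 hR with h | h
  · nlinarith [mul_nonpos_of_nonpos_of_nonneg h (by positivity : 0 ≤ ω + η),
      mul_pos (mul_pos hω hω) hM]
  · nlinarith [mul_le_mul_of_nonneg_right h (by positivity : 0 ≤ ω + η),
      mul_pos (mul_pos hη hη) hM]

theorem eventually_mul_le_two_pow (c : ℝ) : ∀ᶠ n : ℕ in Filter.atTop, c * n ≤ 2 ^ n := by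
  have ho : (fun n : ℕ => c * n) =o[Filter.atTop] fun n => (2 : ℝ) ^ n :=
    (isLittleO_coe_const_pow_of_one_lt one_lt_two).const_mul_left c
  filter_upwards [ho.bound one_pos] with n hn
  simpa using (le_abs_self _).trans hn

theorem rpow_div_le_rpow {B c ω η R : ℝ} {M K : ℕ} (hB : 1 ≤ B) (hc : 0 ≤ c)
    (hω : 0 < ω) (hη : 0 < η) (hM : 0 < M) (hKM : K ≤ 2 * M) (hcM : ω * c * M ≤ 2 ^ M)
    (hR : 0 ≤ R) (hRM : R ≤ max 0 ((ω - η) * M)) :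
    (ω * M * (c * B ^ K)) ^ (R / (ω * M - R)) ≤ (2 * B ^ 2) ^ (ω * M / η) := by
  have hbase : ω * M * (c * B ^ K) ≤ (2 * B ^ 2) ^ M :=
    calc ω * M * (c * B ^ K) = (ω * c * M) * B ^ K := by ring
      _ ≤ 2 ^ M * B ^ (2 * M) := by gcongr
      _ = (2 * B ^ 2) ^ M := by rw [mul_pow, pow_mul]
  have hM' : (0 : ℝ) < M := Nat.cast_pos.2 hM
  have hexp : 0 ≤ R / (ω * M - R) :=
    div_nonneg hR (sub_nonneg.2 (lt_mul_of_le_max_zero_sub_mul hω hη hM' hRM).le)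
  have hone : 1 ≤ (2 * B ^ 2) ^ M := one_le_pow₀ (by nlinarith)
  calc (ω * M * (c * B ^ K)) ^ (R / (ω * M - R))
      ≤ ((2 * B ^ 2) ^ M) ^ (R / (ω * M - R)) :=
        Real.rpow_le_rpow (by positivity) hbase hexp
    _ ≤ ((2 * B ^ 2) ^ M) ^ (ω / η) :=
        Real.rpow_le_rpow_of_exponent_le hone (div_mul_sub_le_div hω hη hM' hRM)
    _ = (2 * B ^ 2) ^ (ω * M / η) := by
        rw [← Real.rpow_natCast_mul (by positivity)]
        congr 1
        ring

theorem siegel_construction_general {m : ℕ} (hm : 1 ≤ m) {a : Fin m → ℕ → ℚ}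
    (ha : ∀ j, ∃ C, HasGeometricGrowth C (a j)) :
    ∃ C₀ : ℝ, 0 < C₀ ∧ ∀ N : ℕ, 1 ≤ N → ∃ M₀ : ℕ, ∀ M : ℕ, M₀ ≤ M → ∀ η : ℝ, 0 < η →
      ∃ (P : (Fin m → ℕ) → ℂ[X]) (pi : (Fin m → ℕ) → ℕ → ℤ),
        SiegelP m N M ⌊((omegaCard m N : ℝ) - η) * M / thetaCard m N⌋₊ (fun j => Efun (a j)) P ∧
        ∀ κ, inOmega m N κ → ∀ ν < M, (P κ).coeff ν = pi κ ν / ν.factorial ∧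
          |(pi κ ν : ℝ)| ≤ C₀ ^ ((omegaCard m N : ℝ) * M / η) := by
  obtain ⟨C, hC, haC⟩ := exists_one_le_forall_hasGeometricGrowth ha
  have hB : 1 ≤ 2 * C ^ (m + 1) := by linarith [one_le_pow₀ (n := m + 1) hC]
  refine ⟨2 * (2 * C ^ (m + 1)) ^ 2, by positivity, fun N hN => ?_⟩
  obtain ⟨M₀, hM₀⟩ := Filter.eventually_atTop.1
    ((eventually_mul_le_two_pow ((omegaCard m N : ℝ) * (m + 1))).and (Filter.eventually_gt_atTop 0))
  refine ⟨M₀, fun M hM η hη => ?_⟩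
  obtain ⟨hpow, hM_pos⟩ := hM₀ M hM
  set K := ⌊((omegaCard m N : ℝ) - η) * M / thetaCard m N⌋₊
  have hθ : (0 : ℝ) < thetaCard m N := Nat.cast_pos.2 (thetaCard_pos hm)
  have hω : (0 : ℝ) < omegaCard m N := Nat.cast_pos.2 (omegaCard_pos hm)
  have hθK : thetaCard m N * (K : ℝ) ≤ max 0 ((omegaCard m N - η) * M) :=
    mul_floor_div_le_max hθ _
  have hlt : thetaCard m N * K < omegaCard m N * M := by
    exact_mod_cast lt_mul_of_le_max_zero_sub_mul hω hη (Nat.cast_pos.2 hM_pos) hθK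
  obtain ⟨P, pi, hP, hpi⟩ := HasGeometricGrowth.exists_siegelP hm hN hC haC hlt
  exact ⟨P, pi, hP, fun κ _ ν _ => ⟨(hpi κ ν).1, (hpi κ ν).2.trans <|
    rpow_div_le_rpow hB (by positivity) hω hη hM_pos (le_two_mul_of_thetaCard_mul_lt hlt) hpow
      (by positivity) hθK⟩⟩

/-- **Lemma 4.1 (Siegel's construction of graded Padé approximants).** Let
`f₁, …, f_m` be E-functions with rational coefficients such that `1, f₁, …, f_m` are
linearly independent over `ℂ(z)`. There is a constant `C₀ > 0`, depending only on the
`fⱼ`, such that for all sufficiently large `N`, all `0 < η ≤ 1/(3(N+m-1))` and all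
sufficiently large `M` (in terms of the `fⱼ`, `N`, `η`), with `K = ⌊(ω-η)M/θ⌋`, there
exist polynomials `P_κ` of degree `< M` (`κ ∈ Ω`), not all zero, with
`ord₀(P_κ + ∑ⱼ P_{κ-eⱼ} fⱼ) ≥ K` for all `κ ∈ Θ`, whose coefficients are
`π_{κ,ν}/ν!` with `π_{κ,ν} ∈ ℤ` and `|π_{κ,ν}| ≤ C₀^{ωM/η}`. -/
theorem siegel_construction
    (m : ℕ) (hm : 1 ≤ m) (a : Fin m → ℕ → ℚ) (ha : ∀ j, IsEFunQ (a j))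
    (hindep : OneFLinIndep m (fun j => Efun (a j))) :
    ∃ C₀ : ℝ, 0 < C₀ ∧ ∃ N₀ : ℕ, ∀ N : ℕ, N₀ ≤ N →
      ∀ η : ℝ, 0 < η → η ≤ 1 / (3 * ((N : ℝ) + (m : ℝ) - 1)) →
      ∃ M₀ : ℕ, ∀ M : ℕ, M₀ ≤ M →
      ∃ (P : (Fin m → ℕ) → Polynomial ℂ) (pi : (Fin m → ℕ) → ℕ → ℤ),
        SiegelP m N M
          (Nat.floor (((omegaCard m N : ℝ) - η) * (M : ℝ) / (thetaCard m N : ℝ)))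
          (fun j => Efun (a j)) P ∧
        ∀ κ, inOmega m N κ → ∀ ν < M,
          (P κ).coeff ν = (pi κ ν : ℂ) / (ν.factorial : ℂ) ∧
          (|pi κ ν| : ℝ) ≤ C₀ ^ ((omegaCard m N : ℝ) * (M : ℝ) / η) := by
  obtain ⟨C₀, hC₀, hP⟩ := siegel_construction_general hm fun j => (ha j).exists_hasGeometricGrowth
  exact ⟨C₀, hC₀, 1, fun N hN η hη _ => (hP N hN).imp fun _ hM₀ M hM => hM₀ M hM η hη⟩
end
end

section
/- Let R be a vector subspace of ℂ^Ω defined over ℚ̄. Then dim R ≥ (2 − (m−1)/(N+m−1)) · dim(F ∩ R), and equality holds if and only if R = {0} or R = ℂ^Ω. -/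
open Polynomial

noncomputable section

/-- The canonical basis vector `E_κ`. -/
def Evec {m : ℕ} (κ : Fin m → ℕ) : (Fin m → ℕ) → ℂ := fun μ => if μ = κ then 1 else 0

/-- The vector `Z_κ = E_κ + ∑_j ξ_j E_{κ-e_j}` (with `E_{κ-e_j} = 0` when `κ_j = 0`). -/
def Zvec {m : ℕ} (ξ : Fin m → ℂ) (κ : Fin m → ℕ) : (Fin m → ℕ) → ℂ :=
  Evec κ + ∑ j : Fin m, (if κ j = 0 then 0 else ξ j • Evec (sub1 κ j))

/-- `ℂ^Ω`, realized as the space of families supported on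
`Ω = {κ : N-1 ≤ |κ| ≤ N}` (the span of the `E_κ`, `κ ∈ Ω`). -/
def OmegaSpace (m N : ℕ) : Submodule ℂ ((Fin m → ℕ) → ℂ) :=
  Submodule.span ℂ {v | ∃ κ, inOmega m N κ ∧ v = Evec κ}

/-- `F = Span{Z_κ : κ ∈ Θ} ⊆ ℂ^Ω`, where `Θ = {κ : |κ| = N}`. -/
def Fspace (m N : ℕ) (ξ : Fin m → ℂ) : Submodule ℂ ((Fin m → ℕ) → ℂ) :=
  Submodule.span ℂ {v | ∃ κ, wt κ = N ∧ v = Zvec ξ κ}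

/-- A subspace of `ℂ^Ω` is defined over `ℚ̄` if it is spanned by vectors all of whose
coordinates are algebraic numbers (equivalently, it has a `ℂ`-basis of such vectors). -/
def DefinedOverQbar {m : ℕ} (R : Submodule ℂ ((Fin m → ℕ) → ℂ)) : Prop :=
  ∃ s : Set ((Fin m → ℕ) → ℂ), (∀ v ∈ s, ∀ κ, IsAlgebraic ℚ (v κ)) ∧
    Submodule.span ℂ s = R

/-- `1, ξ₁, …, ξ_m` are linearly independent over `ℚ̄`. -/
def LinIndepOverQbar (m : ℕ) (ξ : Fin m → ℂ) : Prop :=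
  ∀ (a : ℂ) (c : Fin m → ℂ), IsAlgebraic ℚ a → (∀ j, IsAlgebraic ℚ (c j)) →
    a + ∑ j : Fin m, c j * ξ j = 0 → a = 0 ∧ ∀ j, c j = 0

/-!
Write `m = n + 1`. For `x ∈ L^m` let `ν_ξ(x) ∈ F_ξ` be the image of the degree-`N` Veronese vector
of `x` under `E_κ ↦ Z_κ`; then `ν_ξ(x) - ν_ζ(x)` is `(ξ - ζ) · x` times the degree-`(N - 1)`
Veronese vector. Because `1, ξ_1, …, ξ_m` are independent over the algebraically closed field `K`,
one can choose specializations `ζ_i` of `ξ` over `K` such that the hyperplanes `ξ - ζ_i` are in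
general position; let `p_J` be the common point of the hyperplanes with index in `J`, `|J| = n`.

For `N + n` hyperplanes the vectors `ν_ξ(p_J)` form a basis of `F_ξ`, they lie in `F_{ζ_i}` when
`i ∈ J`, and `F_ξ + F_{ζ_i}` is everything. As `R` is defined over `K`, semicontinuity of the rank
gives `dim (F_{ζ_i} + R) ≤ dim (F_ξ + R)`, which bounds the dimension modulo `R` of the span of the
`ν_ξ(p_J)` with `i ∈ J`. Shearer's inequality, in the form
`n dim ⟨g_J⟩_J ≤ ∑_i dim ⟨g_J⟩_{J ∋ i}`, turns these bounds into the theorem.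

Equality in Shearer's inequality forces the nonzero `g_J` to be independent, so `F_ξ ∩ R` is spanned
by the `ν_ξ(p_J)` it contains. Exchanging one hyperplane for an additional one shows that it
contains all of them or none.
-/

section GeneralPosition

/-- `ζ` is a specialization of `ξ` over `K`: every polynomial relation with coefficients in `K`
satisfied by `ξ` is satisfied by `ζ`. -/
def IsSpecialization (K : Type*) {L σ : Type*} [CommRing K] [CommRing L] [Algebra K L]
    (ξ ζ : σ → L) : Prop :=
  ∀ p : MvPolynomial σ K, MvPolynomial.aeval ξ p = 0 → MvPolynomial.aeval ζ p = 0

theorem exists_isSpecialization_aeval_ne_zero {K L σ : Type*} [Field K] [IsAlgClosed K]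
    [CommRing L] [IsDomain L] [Algebra K L] [Finite σ] {ξ : σ → L} {p : MvPolynomial σ K}
    (hp : MvPolynomial.aeval ξ p ≠ 0) :
    ∃ ζ : σ → K, IsSpecialization K ξ (algebraMap K L ∘ ζ) ∧ MvPolynomial.aeval ζ p ≠ 0 := by
  have hprime : (RingHom.ker (MvPolynomial.aeval (R := K) ξ)).IsPrime := RingHom.ker_isPrime _
  have hvanish := MvPolynomial.IsPrime.vanishingIdeal_zeroLocus (K := K)
    (RingHom.ker (MvPolynomial.aeval (R := K) ξ))
  have hp' : p ∉ MvPolynomial.vanishingIdeal K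
      (MvPolynomial.zeroLocus K (RingHom.ker (MvPolynomial.aeval (R := K) ξ))) := by
    rwa [hvanish, RingHom.mem_ker]
  simp only [MvPolynomial.mem_vanishingIdeal_iff, not_forall] at hp'
  obtain ⟨ζ, hζ, hpζ⟩ := hp'
  refine ⟨ζ, fun q hq => ?_, hpζ⟩
  rw [MvPolynomial.aeval_algebraMap_apply, MvPolynomial.mem_zeroLocus_iff.1 hζ q hq, map_zero]

variable {K L : Type*} [Field K] [Field L] [Algebra K L]

theorem exists_aeval_ne_zero_forall_sub_mem {m : ℕ} {ξ : Fin m → L}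
    (hξ : LinearIndependent K (Fin.cons 1 ξ : Fin (m + 1) → L))
    {U : Submodule L (Fin m → L)} (hU : U ≠ ⊤) :
    ∃ p : MvPolynomial (Fin m) K, MvPolynomial.aeval ξ p ≠ 0 ∧
      ∀ ζ : Fin m → K, ξ - algebraMap K L ∘ ζ ∈ U → MvPolynomial.aeval ζ p = 0 := by
  obtain ⟨f, hf, hUf⟩ := U.exists_le_ker_of_lt_top hU.lt_top
  obtain ⟨j₀, hj₀⟩ : ∃ j, f (Pi.single j 1) ≠ 0 := by
    by_contra! h
    exact hf (LinearMap.pi_ext' fun j => LinearMap.ext_ring (h j))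
  obtain ⟨τ, hτ⟩ := Module.Projective.exists_dual_ne_zero K hj₀
  -- A form `f` over `L` need not be defined over `K`, but its `K`-linear image under `τ` is.
  refine ⟨∑ j, MvPolynomial.C (τ (f (Pi.single j 1))) * MvPolynomial.X j
    - MvPolynomial.C (τ (f ξ)), fun hp => hτ ?_, fun ζ hζ => ?_⟩
  · have hrel : ∑ i : Fin (m + 1), (Fin.cons (-τ (f ξ)) (fun j => τ (f (Pi.single j 1))) :
        Fin (m + 1) → K) i • (Fin.cons 1 ξ : Fin (m + 1) → L) i = 0 := by
      rw [← hp]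
      simp [Fin.sum_univ_succ, Algebra.smul_def, sub_eq_neg_add]
    simpa using Fintype.linearIndependent_iff.1 hξ _ hrel j₀.succ
  · have hfξ : f ξ = f (algebraMap K L ∘ ζ) := sub_eq_zero.1 (by rw [← map_sub]; exact hUf hζ)
    have hfζ : f (algebraMap K L ∘ ζ) = ∑ j, ζ j • f (Pi.single j 1) := by
      have hζ_sum : algebraMap K L ∘ ζ = ∑ j, ζ j • Pi.single (M := fun _ => L) j 1 := by
        ext; simp [Pi.single_apply, Algebra.smul_def]
      simp only [hζ_sum, map_sum, LinearMap.map_smul_of_tower]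
    simp [hfξ, hfζ, mul_comm]

theorem exists_isSpecialization_forall_sub_notMem [IsAlgClosed K] {m : ℕ} {ξ : Fin m → L}
    (hξ : LinearIndependent K (Fin.cons 1 ξ : Fin (m + 1) → L))
    (𝒰 : Finset (Submodule L (Fin m → L))) (h𝒰 : ∀ U ∈ 𝒰, U ≠ ⊤) :
    ∃ ζ : Fin m → L, IsSpecialization K ξ ζ ∧ ∀ U ∈ 𝒰, ξ - ζ ∉ U := by
  choose! p hpξ hp using fun U (hU : U ∈ 𝒰) => exists_aeval_ne_zero_forall_sub_mem hξ (h𝒰 U hU)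
  have hprod : MvPolynomial.aeval ξ (∏ U ∈ 𝒰, p U) ≠ 0 := by
    rw [map_prod]
    exact Finset.prod_ne_zero_iff.2 hpξ
  obtain ⟨ζ, hζ, hpζ⟩ := exists_isSpecialization_aeval_ne_zero hprod
  rw [map_prod, Finset.prod_ne_zero_iff] at hpζ
  exact ⟨_, hζ, fun U hU hmem => hpζ U hU (hp U hU ζ hmem)⟩

/-- The vectors `x i`, `i ∈ A`, are in linearly general position: any `dim V` of them, or fewer,
are linearly independent. -/
def InGeneralPosition (L : Type*) {V ι : Type*} [Field L] [AddCommGroup V] [Module L V]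
    (x : ι → V) (A : Finset ι) : Prop :=
  ∀ I ⊆ A, I.card ≤ Module.finrank L V → LinearIndepOn L x (I : Set ι)

theorem InGeneralPosition.insert_of_notMem_span {V ι : Type*} [DecidableEq ι] [AddCommGroup V]
    [Module L V] {x : ι → V} {A : Finset ι} (hx : InGeneralPosition L x A) {a : ι}
    (hxa : ∀ I ⊆ A, I.card < Module.finrank L V → x a ∉ Submodule.span L (x '' I)) :
    InGeneralPosition L x (insert a A) := by
  intro I hI hcard
  by_cases haI : a ∈ I
  · have hsub : I.erase a ⊆ A := Finset.subset_insert_iff.1 hI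
    have hlt : (I.erase a).card < Module.finrank L V :=
      (Finset.card_erase_lt_of_mem haI).trans_le hcard
    rw [← Finset.insert_erase haI, Finset.coe_insert, linearIndepOn_insert (by simp)]
    exact ⟨hx _ hsub hlt.le, hxa _ hsub hlt⟩
  · exact hx I ((Finset.subset_insert_iff_of_notMem haI).1 hI) hcard

theorem InGeneralPosition.congr {V ι : Type*} [AddCommGroup V] [Module L V]
    {x y : ι → V} {A : Finset ι} (hx : InGeneralPosition L x A) (hxy : ∀ i ∈ A, x i = y i) :
    InGeneralPosition L y A := fun I hI hcard =>
  (hx I hI hcard).congr fun i hi => hxy i (hI hi)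

theorem exists_inGeneralPosition {V ι : Type*} [AddCommGroup V] [Module L V] {T : Set V}
    (hT : ∀ 𝒰 : Finset (Submodule L V), (∀ U ∈ 𝒰, U ≠ ⊤) → ∃ x ∈ T, ∀ U ∈ 𝒰, x ∉ U)
    (A : Finset ι) : ∃ x : ι → V, (∀ i, x i ∈ T) ∧ InGeneralPosition L x A := by
  classical
  induction A using Finset.induction_on with
  | empty =>
    obtain ⟨y, hy, -⟩ := hT ∅ (by simp)
    refine ⟨fun _ => y, fun _ => hy, fun I hI _ => ?_⟩
    simp [Finset.subset_empty.1 hI]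
  | insert a A ha ih =>
    obtain ⟨x, hxT, hx⟩ := ih
    let 𝒰 : Finset (Submodule L V) :=
      (A.powerset.filter fun I => I.card < Module.finrank L V).image
        fun I : Finset ι => Submodule.span L (x '' I)
    have h𝒰 : ∀ U ∈ 𝒰, U ≠ ⊤ := by
      simp only [𝒰, Finset.mem_image, Finset.mem_filter]
      rintro _ ⟨I, ⟨-, hI⟩, rfl⟩ htop
      have hle := finrank_span_finset_le_card (R := L) (I.image x)
      rw [Finset.coe_image, Set.finrank, htop, finrank_top] at hle
      exact (hle.trans Finset.card_image_le).not_gt hI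
    obtain ⟨y, hyT, hy⟩ := hT 𝒰 h𝒰
    have hagree : ∀ i ∈ A, x i = Function.update x a y i := fun i hi =>
      (Function.update_of_ne (ne_of_mem_of_not_mem hi ha) _ _).symm
    refine ⟨Function.update x a y, fun i => ?_,
      (hx.congr hagree).insert_of_notMem_span fun I hI hlt => ?_⟩
    · rcases eq_or_ne i a with rfl | hi
      · simpa using hyT
      · simpa [hi] using hxT i
    · rw [Function.update_self, ← Set.image_congr fun i hi => hagree i (hI hi)]
      exact hy _ (Finset.mem_image_of_mem _ (by simp [hI, hlt]))

end GeneralPosition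

section Semicontinuity

variable {L : Type*} [Field L]

theorem span_range_swap_eq_top {ι I : Type*} [Finite ι] {v : ι → I → L}
    (hv : LinearIndependent L v) :
    Submodule.span L (Set.range (Function.swap v)) = ⊤ := by
  classical
  have := Fintype.ofFinite ι
  by_contra hspan
  obtain ⟨f, hf, hker⟩ := Submodule.exists_le_ker_of_lt_top _ (lt_top_iff_ne_top.2 hspan)
  refine hf (LinearMap.pi_ext' fun i => LinearMap.ext_ring ?_)
  refine Fintype.linearIndependent_iff.1 hv (fun i => f (Pi.single i 1)) (funext fun t => ?_) i
  have hft : f (Function.swap v t) = 0 := hker (Submodule.subset_span ⟨t, rfl⟩)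
  have hsum : Function.swap v t = ∑ i, v i t • Pi.single (M := fun _ => L) i 1 := by
    ext; simp [Pi.single_apply, Function.swap]
  simpa [hsum, mul_comm] using hft

theorem exists_det_submatrix_ne_zero {ι I : Type*} [Fintype ι] [DecidableEq ι] {v : ι → I → L}
    (hv : LinearIndependent L v) : ∃ t : ι → I, ((Matrix.of v).submatrix id t).det ≠ 0 := by
  obtain ⟨κ, a, -, hspan, hli⟩ := exists_linearIndependent' L (Function.swap v)
  let b : Module.Basis κ L (ι → L) := .mk hli (by rw [hspan, span_range_swap_eq_top hv])
  let e : ι ≃ κ := (Pi.basisFun L ι).indexEquiv b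
  refine ⟨a ∘ e, ?_⟩
  have hcols : LinearIndependent L ((Matrix.of v).submatrix id (a ∘ e)).col :=
    hli.comp e e.injective
  exact ((Matrix.isUnit_iff_isUnit_det _).1
    (Matrix.linearIndependent_cols_iff_isUnit.1 hcols)).ne_zero

variable {K : Type*} [Field K] [Algebra K L] {σ ι I : Type*} {ξ ζ : σ → L}

theorem IsSpecialization.linearIndependent (h : IsSpecialization K ξ ζ) [Finite ι]
    {w : ι → I → MvPolynomial σ K}
    (hw : LinearIndependent L fun i t => MvPolynomial.aeval ζ (w i t)) :
    LinearIndependent L fun i t => MvPolynomial.aeval ξ (w i t) := by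
  classical
  have := Fintype.ofFinite ι
  obtain ⟨t, ht⟩ := exists_det_submatrix_ne_zero hw
  let minor : MvPolynomial σ K := ((Matrix.of w).submatrix id t).det
  have haeval (x : σ → L) : MvPolynomial.aeval x minor =
      ((Matrix.of fun i t => MvPolynomial.aeval x (w i t)).submatrix id t).det :=
    AlgHom.map_det _ _
  have hminor : MvPolynomial.aeval ξ minor ≠ 0 := fun h0 => ht (haeval ζ ▸ h minor h0)
  rw [haeval] at hminor
  exact (Matrix.linearIndependent_rows_of_det_ne_zero hminor).of_comp (LinearMap.funLeft L L t)

theorem IsSpecialization.finrank_span_le (h : IsSpecialization K ξ ζ)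
    (w : ι → I → MvPolynomial σ K)
    [FiniteDimensional L (Submodule.span L (Set.range fun i t => MvPolynomial.aeval ξ (w i t)))]
    [FiniteDimensional L (Submodule.span L (Set.range fun i t => MvPolynomial.aeval ζ (w i t)))] :
    Module.finrank L (Submodule.span L (Set.range fun i t => MvPolynomial.aeval ζ (w i t))) ≤
      Module.finrank L (Submodule.span L (Set.range fun i t => MvPolynomial.aeval ξ (w i t))) := by
  obtain ⟨κ, a, -, hspan, hli⟩ :=
    exists_linearIndependent' L fun i t => MvPolynomial.aeval ζ (w i t)
  have hfin : FiniteDimensional L (Submodule.span L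
      (Set.range ((fun i t => MvPolynomial.aeval ζ (w i t)) ∘ a))) := hspan ▸ inferInstance
  have := Module.Finite.finite_basis (Module.Basis.span hli)
  have := Fintype.ofFinite κ
  rw [← hspan, finrank_span_eq_card hli, ← finrank_span_eq_card (h.linearIndependent hli)]
  exact Submodule.finrank_mono (Submodule.span_mono (Set.range_comp_subset_range a
    fun i t => MvPolynomial.aeval ξ (w i t)))

end Semicontinuity

section Shearer

variable {L W : Type*} [Field L] [AddCommGroup W] [Module L W]

theorem exists_subset_linearIndepOn_span_eq {α : Type*} (g : α → W) (X : Finset α) :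
    ∃ B ⊆ X, LinearIndepOn L g (B : Set α) ∧
      Submodule.span L (g '' B) = Submodule.span L (g '' X) := by
  obtain ⟨B, hBX, -, hspan, hli⟩ :=
    exists_linearIndepOn_extension (linearIndepOn_empty L g) (Set.empty_subset (X : Set α))
  lift B to Finset α using X.finite_toSet.subset hBX
  refine ⟨B, Finset.coe_subset.1 hBX, hli, le_antisymm ?_ (Submodule.span_le.2 hspan)⟩
  exact Submodule.span_mono (Set.image_mono hBX)

theorem finrank_span_image_eq_card {α : Type*} {g : α → W} {B : Finset α}
    (hB : LinearIndepOn L g (B : Set α)) :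
    Module.finrank L (Submodule.span L (g '' B)) = B.card := by
  rw [Set.image_eq_range]
  simpa using finrank_span_eq_card hB

theorem mem_span_image_sep_of_linearIndepOn {α β : Type*} {g : α → W} {B : Set α}
    (hB : LinearIndepOn L g B) {S : Set β} {r : β → α → Prop} {x : W}
    (hx : x ∈ Submodule.span L (g '' B))
    (hxr : ∀ i ∈ S, x ∈ Submodule.span L (g '' {b ∈ B | r i b})) :
    x ∈ Submodule.span L (g '' {b ∈ B | ∀ i ∈ S, r i b}) := by
  obtain ⟨l, hl, rfl⟩ := (Finsupp.mem_span_image_iff_linearCombination L).1 hx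
  refine (Finsupp.mem_span_image_iff_linearCombination L).2 ⟨l, fun b hb => ⟨hl hb, ?_⟩, rfl⟩
  intro i hi
  obtain ⟨l', hl', heq⟩ := (Finsupp.mem_span_image_iff_linearCombination L).1 (hxr i hi)
  have hll' : l' = l := linearIndepOn_iffₛ.1 hB l' (fun b hb => (hl' hb).1) l hl heq
  exact (hl' (hll' ▸ hb)).2

variable {ι : Type*} {n : ℕ} {U : Finset ι} {𝒥 : Finset (Finset ι)}

theorem sum_card_filter_mem_eq_mul_card [DecidableEq ι] (h𝒥 : 𝒥 ⊆ U.powersetCard n) :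
    ∑ i ∈ U, (𝒥.filter (i ∈ ·)).card = n * 𝒥.card := by
  have hdouble := Finset.sum_card_bipartiteAbove_eq_sum_card_bipartiteBelow
    (s := U) (t := 𝒥) fun i J => i ∈ J
  refine hdouble.trans (mul_comm n _ ▸ Finset.sum_const_nat fun J hJ => ?_)
  obtain ⟨hJU, hcard⟩ := Finset.mem_powersetCard.1 (h𝒥 hJ)
  rw [Finset.bipartiteBelow, Finset.filter_mem_eq_inter, Finset.inter_eq_right.2 hJU, hcard]

theorem span_image_filter_mem_mono (g : Finset ι → W) {B : Finset (Finset ι)} (hB𝒥 : B ⊆ 𝒥)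
    (i : ι) : Submodule.span L (g '' {J ∈ B | i ∈ J}) ≤
      Submodule.span L (g '' {J ∈ 𝒥 | i ∈ J}) :=
  Submodule.span_mono (Set.image_mono fun _ hJ => ⟨hB𝒥 hJ.1, hJ.2⟩)

theorem finrank_span_filter_mem_eq_card [DecidableEq ι] {g : Finset ι → W}
    {B : Finset (Finset ι)} (hB : LinearIndepOn L g (B : Set (Finset ι))) (i : ι) :
    Module.finrank L (Submodule.span L (g '' {J ∈ B | i ∈ J})) =
      (B.filter (i ∈ ·)).card := by
  rw [← Finset.coe_filter, finrank_span_image_eq_card]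
  exact hB.mono (Finset.coe_subset.2 (Finset.filter_subset _ B))

theorem card_filter_mem_le_finrank_span [DecidableEq ι] {g : Finset ι → W}
    {B : Finset (Finset ι)} (hB : LinearIndepOn L g (B : Set (Finset ι))) (hB𝒥 : B ⊆ 𝒥) (i : ι) :
    (B.filter (i ∈ ·)).card ≤
      Module.finrank L (Submodule.span L (g '' {J ∈ 𝒥 | i ∈ J})) := by
  have := FiniteDimensional.span_of_finite L ((𝒥.finite_toSet.sep (i ∈ ·)).image g)
  rw [← finrank_span_filter_mem_eq_card hB]
  exact Submodule.finrank_mono (span_image_filter_mem_mono g hB𝒥 i)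

theorem mul_finrank_span_le_sum_finrank_span (g : Finset ι → W) (h𝒥 : 𝒥 ⊆ U.powersetCard n) :
    n * Module.finrank L (Submodule.span L (g '' 𝒥)) ≤ ∑ i ∈ U,
      Module.finrank L (Submodule.span L (g '' {J ∈ 𝒥 | i ∈ J})) := by
  classical
  obtain ⟨B, hB𝒥, hB, hspan⟩ := exists_subset_linearIndepOn_span_eq (L := L) g 𝒥
  rw [← hspan, finrank_span_image_eq_card hB, ← sum_card_filter_mem_eq_mul_card (hB𝒥.trans h𝒥)]
  exact Finset.sum_le_sum fun i _ => card_filter_mem_le_finrank_span hB hB𝒥 i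

theorem mem_of_forall_span_filter_mem_eq {g : Finset ι → W} {B : Finset (Finset ι)}
    (h𝒥 : 𝒥 ⊆ U.powersetCard n) (hB : LinearIndepOn L g (B : Set (Finset ι))) (hB𝒥 : B ⊆ 𝒥)
    (hspan : ∀ i ∈ U, Submodule.span L (g '' {J ∈ B | i ∈ J}) =
      Submodule.span L (g '' {J ∈ 𝒥 | i ∈ J}))
    {J : Finset ι} (hJ : J ∈ 𝒥) (hJspan : g J ∈ Submodule.span L (g '' B)) (hgJ : g J ≠ 0) :
    J ∈ B := by
  by_contra hJB
  obtain ⟨hJU, hcard⟩ := Finset.mem_powersetCard.1 (h𝒥 hJ)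
  have hmem : g J ∈ Submodule.span L (g '' {K ∈ (B : Set _) | ∀ i ∈ (J : Set ι), i ∈ K}) := by
    refine mem_span_image_sep_of_linearIndepOn hB hJspan fun i hi => ?_
    have hJi : g J ∈ Submodule.span L (g '' {J ∈ 𝒥 | i ∈ J}) :=
      Submodule.subset_span ⟨J, ⟨hJ, hi⟩, rfl⟩
    rwa [← hspan i (hJU hi)] at hJi
  have hempty : {K ∈ (B : Set (Finset ι)) | ∀ i ∈ (J : Set ι), i ∈ K} = ∅ := by
    refine Set.eq_empty_of_forall_notMem fun K ⟨hK, hJK⟩ => hJB ?_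
    have hcardK := (Finset.mem_powersetCard.1 (h𝒥 (hB𝒥 hK))).2
    rwa [Finset.eq_of_subset_of_card_le hJK (by omega)]
  rw [hempty, Set.image_empty, Submodule.span_empty, Submodule.mem_bot] at hmem
  exact hgJ hmem

theorem linearIndepOn_ne_zero_of_mul_finrank_span_eq {g : Finset ι → W}
    (h𝒥 : 𝒥 ⊆ U.powersetCard n)
    (heq : n * Module.finrank L (Submodule.span L (g '' 𝒥)) = ∑ i ∈ U,
      Module.finrank L (Submodule.span L (g '' {J ∈ 𝒥 | i ∈ J}))) :
    LinearIndepOn L g {J ∈ (𝒥 : Set (Finset ι)) | g J ≠ 0} := by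
  classical
  obtain ⟨B, hB𝒥, hB, hspan⟩ := exists_subset_linearIndepOn_span_eq (L := L) g 𝒥
  rw [← hspan, finrank_span_image_eq_card hB, ← sum_card_filter_mem_eq_mul_card (hB𝒥.trans h𝒥),
    Finset.sum_eq_sum_iff_of_le fun i _ => card_filter_mem_le_finrank_span hB hB𝒥 i] at heq
  refine hB.mono fun J ⟨hJ, hgJ⟩ => mem_of_forall_span_filter_mem_eq h𝒥 hB hB𝒥 (fun i hi => ?_) hJ
    (hspan ▸ Submodule.subset_span ⟨J, hJ, rfl⟩) hgJ
  have := FiniteDimensional.span_of_finite L ((𝒥.finite_toSet.sep (i ∈ ·)).image g)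
  exact Submodule.eq_of_le_of_finrank_eq (span_image_filter_mem_mono g hB𝒥 i)
    ((finrank_span_filter_mem_eq_card hB i).trans (heq i hi))

end Shearer

section Contraction

/-- Contraction of a family `v` indexed by multi-indices with the vector `ξ`. It sends the basis
vector `E_κ` to `∑ j, ξ_j E_{κ-e_j}`. -/
def contraction {A : Type*} [CommSemiring A] {m : ℕ} (ξ : Fin m → A) :
    ((Fin m → ℕ) → A) →ₗ[A] (Fin m → ℕ) → A where
  toFun v μ := ∑ j, ξ j * v (μ + Pi.single j 1)
  map_add' v w := by
    ext μ
    simp only [Pi.add_apply, mul_add, Finset.sum_add_distrib]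
  map_smul' a v := by
    ext μ
    simp only [Pi.smul_apply, smul_eq_mul, Finset.mul_sum, RingHom.id_apply, mul_left_comm]

theorem contraction_apply {A : Type*} [CommSemiring A] {m : ℕ} (ξ : Fin m → A)
    (v : (Fin m → ℕ) → A) (μ : Fin m → ℕ) :
    contraction ξ v μ = ∑ j, ξ j * v (μ + Pi.single j 1) := rfl

/-- The map `v ↦ v + contraction ξ v`, which sends `E_κ` to the vector `Z_κ`. -/
def addContraction {A : Type*} [CommSemiring A] {m : ℕ} (ξ : Fin m → A) :
    ((Fin m → ℕ) → A) →ₗ[A] (Fin m → ℕ) → A :=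
  LinearMap.id + contraction ξ

theorem map_addContraction {A B : Type*} [CommSemiring A] [CommSemiring B] (φ : A →+* B) {m : ℕ}
    (ξ : Fin m → A) (v : (Fin m → ℕ) → A) :
    φ ∘ addContraction ξ v = addContraction (φ ∘ ξ) (φ ∘ v) := by
  ext μ
  simp [addContraction, contraction_apply]

theorem wt_add_single {m : ℕ} (κ : Fin m → ℕ) (j : Fin m) :
    wt (κ + Pi.single j 1) = wt κ + 1 := by
  simp [wt, Finset.sum_add_distrib]

variable (L : Type*) [Field L]

/-- The space of families supported on multi-indices of weight `k`. -/
def homogeneousSpace (m k : ℕ) : Submodule L ((Fin m → ℕ) → L) where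
  carrier := {v | ∀ κ, wt κ ≠ k → v κ = 0}
  zero_mem' _ _ := rfl
  add_mem' hv hw κ hκ := by simp [hv κ hκ, hw κ hκ]
  smul_mem' a v hv κ hκ := by simp [hv κ hκ]

/-- The space `ℂ^Ω` of the problem for `N + 1`: families supported in weights `N + 1` and `N`. -/
abbrev ambientSpace (m N : ℕ) : Submodule L ((Fin m → ℕ) → L) :=
  homogeneousSpace L m (N + 1) ⊔ homogeneousSpace L m N

/-- The space `F` spanned by the vectors `Z_κ` with `|κ| = N`. -/
def contractionGraph {L : Type*} [Field L] {m : ℕ} (N : ℕ) (ξ : Fin m → L) :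
    Submodule L ((Fin m → ℕ) → L) :=
  (homogeneousSpace L m N).map (addContraction ξ)

theorem homogeneousSpace_eq_span (m k : ℕ) : homogeneousSpace L m k =
    Submodule.span L ((Pi.single · 1) '' (Finset.piAntidiag (Finset.univ : Finset (Fin m)) k)) := by
  refine le_antisymm (fun v hv => ?_) (Submodule.span_le.2 ?_)
  · have hsum : v = ∑ κ ∈ Finset.piAntidiag Finset.univ k, v κ • Pi.single κ 1 := by
      ext μ
      simp only [Finset.sum_apply, Pi.smul_apply, Pi.single_apply, smul_eq_mul, mul_ite, mul_one,
        mul_zero, Finset.sum_ite_eq, Finset.mem_piAntidiag, Finset.mem_univ, implies_true, and_true]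
      split_ifs with hμ
      · rfl
      · exact hv μ hμ
    rw [hsum]
    exact sum_mem fun κ hκ => Submodule.smul_mem _ _ (Submodule.subset_span ⟨κ, hκ, rfl⟩)
  · rintro _ ⟨κ, hκ, rfl⟩ μ hμ
    have hκk : wt κ = k := (Finset.mem_piAntidiag.1 hκ).1
    exact Pi.single_eq_of_ne (by rintro rfl; exact hμ hκk) _

theorem card_piAntidiag_univ_fin_succ (n k : ℕ) :
    (Finset.piAntidiag (Finset.univ : Finset (Fin (n + 1))) k).card = (k + n).choose n := by
  have hcard := Finset.card_finsuppAntidiag_nat_eq_choose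
    (s := (Finset.univ : Finset (Fin (n + 1)))) k
  rw [Finset.finsuppAntidiag, Finset.card_map, Finset.card_attach, Finset.card_univ,
    Fintype.card_fin] at hcard
  rw [hcard, show n + 1 + k - 1 = k + n by omega, Nat.choose_symm_add]

instance (m k : ℕ) : FiniteDimensional L (homogeneousSpace L m k) := by
  rw [homogeneousSpace_eq_span]
  exact FiniteDimensional.span_of_finite L (Set.Finite.image _ (Finset.finite_toSet _))

instance {m : ℕ} (N : ℕ) (ξ : Fin m → L) : FiniteDimensional L (contractionGraph N ξ) := by
  unfold contractionGraph
  infer_instance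

theorem finrank_homogeneousSpace (n k : ℕ) :
    Module.finrank L (homogeneousSpace L (n + 1) k) = (k + n).choose n := by
  have hsingle : LinearIndependent L fun κ : Fin (n + 1) → ℕ => Pi.single (M := fun _ => L) κ 1 :=
    Pi.linearIndependent_single_one _ _
  rw [homogeneousSpace_eq_span, ← card_piAntidiag_univ_fin_succ]
  exact finrank_span_image_eq_card (hsingle.linearIndepOn _)

variable {L} {m : ℕ} (ξ : Fin m → L)

theorem disjoint_homogeneousSpace {k l : ℕ} (hkl : k ≠ l) :
    Disjoint (homogeneousSpace L m k) (homogeneousSpace L m l) := by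
  refine Submodule.disjoint_def.2 fun v hvk hvl => funext fun κ => ?_
  by_cases hκ : wt κ = k
  · exact hvl κ (hκ ▸ hkl)
  · exact hvk κ hκ

theorem contraction_mem_homogeneousSpace {k : ℕ} {v : (Fin m → ℕ) → L}
    (hv : v ∈ homogeneousSpace L m (k + 1)) : contraction ξ v ∈ homogeneousSpace L m k := by
  intro κ hκ
  refine (contraction_apply ξ v κ).trans (Finset.sum_eq_zero fun j _ => ?_)
  rw [hv _ (by rwa [wt_add_single, Ne, add_left_inj]), mul_zero]

theorem contractionGraph_le (N : ℕ) : contractionGraph (N + 1) ξ ≤ ambientSpace L m N := by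
  rintro _ ⟨v, hv, rfl⟩
  exact add_mem (Submodule.mem_sup_left hv)
    (Submodule.mem_sup_right (contraction_mem_homogeneousSpace ξ hv))

theorem finrank_contractionGraph (N : ℕ) : Module.finrank L (contractionGraph (N + 1) ξ) =
    Module.finrank L (homogeneousSpace L m (N + 1)) := by
  have hker : Disjoint (homogeneousSpace L m (N + 1)) (addContraction ξ).ker := by
    refine Submodule.disjoint_def.2 fun v hv hvker => ?_
    have hneg : v = -contraction ξ v := eq_neg_of_add_eq_zero_left hvker
    refine Submodule.disjoint_def.1 (disjoint_homogeneousSpace N.succ_ne_self) v hv ?_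
    rw [hneg]
    exact neg_mem (contraction_mem_homogeneousSpace ξ hv)
  rw [contractionGraph, ← LinearMap.range_domRestrict]
  exact LinearMap.finrank_range_of_inj (LinearMap.injective_domRestrict_iff.2 hker)

/-- The degree-`k` Veronese vector of `x`: the values at `x` of all monomials of degree `k`. -/
def veronese (k : ℕ) (x : Fin m → L) : (Fin m → ℕ) → L :=
  fun κ => if wt κ = k then ∏ j, x j ^ κ j else 0

theorem veronese_mem_homogeneousSpace (k : ℕ) (x : Fin m → L) :
    veronese k x ∈ homogeneousSpace L m k := fun _ hκ => if_neg hκ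

theorem contraction_veronese (k : ℕ) (x : Fin m → L) :
    contraction ξ (veronese (k + 1) x) = (ξ ⬝ᵥ x) • veronese k x := by
  ext μ
  have hmonomial (j : Fin m) :
      ∏ i, x i ^ (μ + Pi.single j 1 : Fin m → ℕ) i = (∏ i, x i ^ μ i) * x j := by
    simp only [Pi.add_apply, pow_add, Finset.prod_mul_distrib, Pi.single_apply, pow_ite, pow_one,
      pow_zero, Finset.prod_ite_eq', Finset.mem_univ, if_true]
  simp only [contraction_apply, veronese, wt_add_single, add_left_inj, hmonomial,
    Pi.smul_apply, smul_eq_mul, dotProduct]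
  split_ifs
  · rw [Finset.sum_mul]
    exact Finset.sum_congr rfl fun j _ => by ring
  · simp

theorem addContraction_veronese (k : ℕ) (x : Fin m → L) :
    addContraction ξ (veronese (k + 1) x) = veronese (k + 1) x + (ξ ⬝ᵥ x) • veronese k x := by
  rw [addContraction, LinearMap.add_apply, LinearMap.id_apply, contraction_veronese]

/-- The value at `v` of the linear form whose coefficients are those of the polynomial `P`. -/
def pairing (P : MvPolynomial (Fin m) L) : ((Fin m → ℕ) → L) →ₗ[L] L :=
  ∑ d ∈ P.support, P.coeff d • LinearMap.proj (⇑d)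

theorem wt_eq_of_mem_support {P : MvPolynomial (Fin m) L} {k : ℕ} (hP : P.IsHomogeneous k)
    {d : Fin m →₀ ℕ} (hd : d ∈ P.support) : wt d = k := by
  simpa [Finsupp.weight_apply, Finsupp.sum_fintype, wt] using
    hP (MvPolynomial.mem_support_iff.1 hd)

theorem pairing_veronese {P : MvPolynomial (Fin m) L} {k : ℕ} (hP : P.IsHomogeneous k)
    (x : Fin m → L) : pairing P (veronese k x) = MvPolynomial.eval x P := by
  rw [pairing, MvPolynomial.eval_eq', LinearMap.sum_apply]
  exact Finset.sum_congr rfl fun d hd => by simp [veronese, wt_eq_of_mem_support hP hd]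

theorem pairing_eq_zero {P : MvPolynomial (Fin m) L} {k l : ℕ} (hP : P.IsHomogeneous k)
    {v : (Fin m → ℕ) → L} (hv : v ∈ homogeneousSpace L m l) (hkl : k ≠ l) : pairing P v = 0 := by
  rw [pairing, LinearMap.sum_apply]
  exact Finset.sum_eq_zero fun d hd => by simp [hv d (wt_eq_of_mem_support hP hd ▸ hkl)]

theorem pairing_addContraction_veronese {P : MvPolynomial (Fin m) L} {k : ℕ}
    (hP : P.IsHomogeneous (k + 1)) (x : Fin m → L) :
    pairing P (addContraction ξ (veronese (k + 1) x)) = MvPolynomial.eval x P := by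
  rw [addContraction_veronese, map_add, pairing_veronese hP, map_smul,
    pairing_eq_zero hP (veronese_mem_homogeneousSpace k x) k.succ_ne_self, smul_zero, add_zero]

end Contraction

section StarConfiguration

variable {L : Type*} [Field L] {ι : Type*} {m n : ℕ}

/-- The points `p J`, for `J ⊆ A` of size `n`, form a star configuration of the hyperplanes `η i`,
`i ∈ A`: among these hyperplanes, exactly those with `i ∈ J` pass through `p J`. -/
def IsStarConfiguration (n : ℕ) (η : ι → Fin m → L) (p : Finset ι → Fin m → L)
    (A : Finset ι) : Prop :=
  ∀ J ∈ A.powersetCard n, ∀ i ∈ A, η i ⬝ᵥ p J = 0 ↔ i ∈ J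

theorem exists_ne_zero_forall_dotProduct_eq_zero (η : ι → Fin m → L) {J : Finset ι}
    (hJ : J.card < m) : ∃ x : Fin m → L, x ≠ 0 ∧ ∀ i ∈ J, η i ⬝ᵥ x = 0 := by
  let M : Matrix J (Fin m) L := Matrix.of fun i => η i
  have hker : M.mulVecLin.ker ≠ ⊥ := LinearMap.ker_ne_bot_of_finrank_lt (by simpa using hJ)
  obtain ⟨x, hx, hx0⟩ := Submodule.exists_mem_ne_zero_of_ne_bot hker
  exact ⟨x, hx0, fun i hi => congrFun (LinearMap.mem_ker.1 hx) ⟨i, hi⟩⟩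

theorem eq_zero_of_forall_dotProduct_eq_zero {η : ι → Fin m → L} {I : Finset ι}
    (hη : LinearIndepOn L η (I : Set ι)) (hI : I.card = m) {x : Fin m → L}
    (hx : ∀ i ∈ I, η i ⬝ᵥ x = 0) : x = 0 := by
  have hspan : Submodule.span L (η '' I) = ⊤ :=
    Submodule.eq_top_of_finrank_eq (by simp [finrank_span_image_eq_card hη, hI])
  have hform : Fintype.linearCombination L x = 0 :=
    LinearMap.ext_on hspan (by rintro _ ⟨i, hi, rfl⟩; exact hx i hi)
  ext j
  simpa using LinearMap.congr_fun hform (Pi.single j 1)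

theorem InGeneralPosition.exists_isStarConfiguration {η : ι → Fin (n + 1) → L} {A : Finset ι}
    (hη : InGeneralPosition L η A) : ∃ p, IsStarConfiguration n η p A := by
  classical
  have hexists (J : Finset ι) : ∃ x : Fin (n + 1) → L, J.card = n →
      x ≠ 0 ∧ ∀ i ∈ J, η i ⬝ᵥ x = 0 := by
    by_cases hJ : J.card = n
    · obtain ⟨x, hx⟩ := exists_ne_zero_forall_dotProduct_eq_zero η (hJ.trans_lt n.lt_succ_self)
      exact ⟨x, fun _ => hx⟩
    · exact ⟨0, fun h => absurd h hJ⟩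
  choose p hp using hexists
  refine ⟨p, fun J hJ i hi => ⟨fun hzero => ?_, (hp J (Finset.mem_powersetCard.1 hJ).2).2 i⟩⟩
  obtain ⟨hJA, hcard⟩ := Finset.mem_powersetCard.1 hJ
  obtain ⟨hne, hJzero⟩ := hp J hcard
  by_contra hiJ
  have hcard' : (insert i J).card = n + 1 := by rw [Finset.card_insert_of_notMem hiJ, hcard]
  refine hne (eq_zero_of_forall_dotProduct_eq_zero
    (hη _ (Finset.insert_subset hi hJA) (by simp [hcard'])) hcard' ?_)
  simpa [hzero] using hJzero

theorem IsStarConfiguration.mono {η : ι → Fin m → L} {p : Finset ι → Fin m → L} {A U : Finset ι}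
    (h : IsStarConfiguration n η p A) (hUA : U ⊆ A) : IsStarConfiguration n η p U :=
  fun J hJ i hi => h J (Finset.powersetCard_mono hUA hJ) i (hUA hi)

theorem card_sdiff_of_mem_powersetCard [DecidableEq ι] {N : ℕ} {J U : Finset ι}
    (hU : U.card = N + n) (hJ : J ∈ U.powersetCard n) : (U \ J).card = N := by
  obtain ⟨hJU, hJcard⟩ := Finset.mem_powersetCard.1 hJ
  rw [Finset.card_sdiff_of_subset hJU, hU, hJcard, Nat.add_sub_cancel]

/-- The product of the linear forms `η i`, `i ∈ I`. -/
def formProd (η : ι → Fin m → L) (I : Finset ι) : MvPolynomial (Fin m) L :=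
  ∏ i ∈ I, ∑ j, MvPolynomial.C (η i j) * MvPolynomial.X j

theorem isHomogeneous_formProd (η : ι → Fin m → L) (I : Finset ι) :
    (formProd η I).IsHomogeneous I.card := by
  rw [Finset.card_eq_sum_ones]
  exact MvPolynomial.IsHomogeneous.prod I _ _ fun i _ =>
    MvPolynomial.IsHomogeneous.sum _ _ _ fun j _ => MvPolynomial.isHomogeneous_C_mul_X _ _

theorem eval_formProd (η : ι → Fin m → L) (I : Finset ι) (x : Fin m → L) :
    MvPolynomial.eval x (formProd η I) = ∏ i ∈ I, η i ⬝ᵥ x := by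
  simp [formProd, dotProduct, map_prod]

namespace IsStarConfiguration

variable {η : ι → Fin m → L} {p : Finset ι → Fin m → L} {A U : Finset ι}

theorem eval_formProd_ne_zero_iff (h : IsStarConfiguration n η p A) {I J : Finset ι}
    (hI : I ⊆ A) (hJ : J ∈ A.powersetCard n) :
    MvPolynomial.eval (p J) (formProd η I) ≠ 0 ↔ Disjoint I J := by
  rw [eval_formProd, Finset.prod_ne_zero_iff, Finset.disjoint_left]
  exact forall₂_congr fun i hi => not_congr (h J hJ i (hI hi))

theorem eval_formProd_sdiff_ne_zero_iff [DecidableEq ι] (h : IsStarConfiguration n η p U)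
    {J K : Finset ι} (hJ : J ∈ U.powersetCard n) (hK : K ∈ U.powersetCard n) :
    MvPolynomial.eval (p K) (formProd η (U \ J)) ≠ 0 ↔ K = J := by
  rw [h.eval_formProd_ne_zero_iff Finset.sdiff_subset hK, Finset.disjoint_left]
  obtain ⟨-, hJcard⟩ := Finset.mem_powersetCard.1 hJ
  obtain ⟨hKU, hKcard⟩ := Finset.mem_powersetCard.1 hK
  refine ⟨fun hdisj => Finset.eq_of_subset_of_card_le (fun i hi => ?_) (by omega), ?_⟩
  · by_contra hiJ
    exact hdisj (Finset.mem_sdiff.2 ⟨hKU hi, hiJ⟩) hi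
  · rintro rfl i hi
    exact (Finset.mem_sdiff.1 hi).2

theorem linearIndepOn_veronese (h : IsStarConfiguration n η p U) {N : ℕ} (hU : U.card = N + n) :
    LinearIndepOn L (fun J => veronese N (p J)) (U.powersetCard n : Set (Finset ι)) := by
  classical
  have hpairing (J K : U.powersetCard n) :
      pairing (formProd η (U \ J.1)) (veronese N (p K)) ≠ 0 ↔ K = J := by
    rw [pairing_veronese (card_sdiff_of_mem_powersetCard hU J.2 ▸ isHomogeneous_formProd η (U \ J)),
      h.eval_formProd_sdiff_ne_zero_iff J.2 K.2, Subtype.ext_iff]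
  refine LinearIndependent.of_pairwise_dual_eq_zero_one _
    (fun J => (pairing (formProd η (U \ J.1)) (veronese N (p J)))⁻¹ •
      pairing (formProd η (U \ J.1)))
    (fun J K hJK => ?_) fun J => ?_
  · simp [not_not.1 ((hpairing J K).not.2 hJK.symm)]
  · simp [(hpairing J J).2 rfl]

end IsStarConfiguration

section Spanning

variable {η : ι → Fin (n + 1) → L} {p : Finset ι → Fin (n + 1) → L} {U : Finset ι} {N : ℕ}

theorem IsStarConfiguration.span_veronese (h : IsStarConfiguration n η p U)
    (hU : U.card = N + n) :
    Submodule.span L ((fun J => veronese N (p J)) '' (U.powersetCard n : Set (Finset ι))) =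
      homogeneousSpace L (n + 1) N := by
  refine Submodule.eq_of_le_of_finrank_le (Submodule.span_le.2 ?_) ?_
  · rintro _ ⟨J, -, rfl⟩
    exact veronese_mem_homogeneousSpace N (p J)
  · rw [finrank_span_image_eq_card (h.linearIndepOn_veronese hU), Finset.card_powersetCard, hU,
      finrank_homogeneousSpace]

theorem IsStarConfiguration.span_addContraction_veronese (h : IsStarConfiguration n η p U)
    (hU : U.card = N + n) (ξ : Fin (n + 1) → L) :
    Submodule.span L ((fun J => addContraction ξ (veronese N (p J))) ''
      (U.powersetCard n : Set (Finset ι))) = contractionGraph N ξ := by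
  rw [contractionGraph, ← h.span_veronese hU, Submodule.map_span, Set.image_image]

end Spanning

end StarConfiguration

section Specialization

variable {K L : Type*} [Field K] [Field L] [Algebra K L] {m : ℕ} {ξ : Fin m → L}

/-- The subspace `R` of `I → L` is spanned by vectors with coordinates in `K`. -/
def IsDefinedOver (K : Type*) {L I : Type*} [Field K] [Field L] [Algebra K L]
    (R : Submodule L (I → L)) : Prop :=
  ∃ s : Set (I → L), (∀ v ∈ s, ∀ i, v i ∈ Set.range (algebraMap K L)) ∧ Submodule.span L s = R

theorem contractionGraph_eq_span (N : ℕ) (ξ : Fin m → L) : contractionGraph N ξ =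
    Submodule.span L ((fun κ => addContraction ξ (Pi.single κ 1)) ''
      (Finset.piAntidiag (Finset.univ : Finset (Fin m)) N)) := by
  rw [contractionGraph, homogeneousSpace_eq_span, Submodule.map_span, Set.image_image]

theorem IsSpecialization.finrank_contractionGraph_sup_le {ζ : Fin m → L}
    (h : IsSpecialization K ξ ζ) (N : ℕ) {R : Submodule L ((Fin m → ℕ) → L)}
    [FiniteDimensional L R] (hR : IsDefinedOver K R) :
    Module.finrank L ↥(contractionGraph N ζ ⊔ R) ≤
      Module.finrank L ↥(contractionGraph N ξ ⊔ R) := by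
  obtain ⟨s, hs, rfl⟩ := hR
  choose c hc using fun v : s => hs v v.2
  let w : Finset.piAntidiag (Finset.univ : Finset (Fin m)) N ⊕ s →
      (Fin m → ℕ) → MvPolynomial (Fin m) K :=
    Sum.elim (fun κ => addContraction MvPolynomial.X (Pi.single κ.1 1))
      fun v κ => MvPolynomial.C (c v κ)
  have hspan (x : Fin m → L) : Submodule.span L (Set.range fun i t => MvPolynomial.aeval x (w i t))
      = contractionGraph N x ⊔ Submodule.span L s := by
    have haeval : (fun i t => MvPolynomial.aeval x (w i t)) =
        Sum.elim (fun κ => addContraction x (Pi.single κ.1 1)) Subtype.val := by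
      funext i
      rcases i with κ | v
      · refine (map_addContraction (MvPolynomial.aeval x).toRingHom _ _).trans ?_
        congr
        · ext
          simp
        · ext
          simp [Pi.single_apply]
      · ext t
        simp [w, hc]
    rw [haeval, Set.Sum.elim_range, Submodule.span_union, Subtype.range_coe,
      contractionGraph_eq_span, Set.image_eq_range]
    rfl
  have hfin (x : Fin m → L) : FiniteDimensional L
      (Submodule.span L (Set.range fun i t => MvPolynomial.aeval x (w i t))) := by
    rw [hspan]
    infer_instance
  rw [← hspan, ← hspan]
  exact h.finrank_span_le w

end Specialization

section Transversality

variable {L ι : Type*} [Field L] {n N : ℕ} {ξ : Fin (n + 1) → L} {ζ : ι → Fin (n + 1) → L}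
  {p : Finset ι → Fin (n + 1) → L} {U : Finset ι}

theorem addContraction_veronese_sub {m : ℕ} (ξ ζ x : Fin m → L) (k : ℕ) :
    addContraction ξ (veronese (k + 1) x) - addContraction ζ (veronese (k + 1) x) =
      ((ξ - ζ) ⬝ᵥ x) • veronese k x := by
  rw [addContraction_veronese, addContraction_veronese, add_sub_add_left_eq_sub, ← sub_smul,
    sub_dotProduct]

theorem IsStarConfiguration.addContraction_veronese_mem_inf
    (h : IsStarConfiguration n (fun i => ξ - ζ i) p U) {J : Finset ι} (hJ : J ∈ U.powersetCard n)
    {i : ι} (hi : i ∈ J) : addContraction ξ (veronese (N + 1) (p J)) ∈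
      contractionGraph (N + 1) ξ ⊓ contractionGraph (N + 1) (ζ i) := by
  have hver := veronese_mem_homogeneousSpace (N + 1) (p J)
  have heq : addContraction ξ (veronese (N + 1) (p J)) =
      addContraction (ζ i) (veronese (N + 1) (p J)) := by
    rw [← sub_eq_zero, addContraction_veronese_sub,
      (h J hJ i ((Finset.mem_powersetCard.1 hJ).1 hi)).2 hi, zero_smul]
  exact ⟨Submodule.mem_map_of_mem hver, heq ▸ Submodule.mem_map_of_mem hver⟩

theorem IsStarConfiguration.ambientSpace_le_sup
    (h : IsStarConfiguration n (fun i => ξ - ζ i) p U) (hU : U.card = N + 1 + n) {i : ι}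
    (hi : i ∈ U) : ambientSpace L (n + 1) N ≤
      contractionGraph (N + 1) ξ ⊔ contractionGraph (N + 1) (ζ i) := by
  classical
  have hlow : homogeneousSpace L (n + 1) N ≤
      contractionGraph (N + 1) ξ ⊔ contractionGraph (N + 1) (ζ i) := by
    rw [← (h.mono (U.erase_subset i)).span_veronese (by rw [Finset.card_erase_of_mem hi]; omega),
      Submodule.span_le]
    rintro _ ⟨J, hJ, rfl⟩
    have hver := veronese_mem_homogeneousSpace (N + 1) (p J)
    have hiJ : i ∉ J := fun hiJ => (Finset.mem_erase.1 ((Finset.mem_powersetCard.1 hJ).1 hiJ)).1 rfl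
    have hne : (ξ - ζ i) ⬝ᵥ p J ≠ 0 :=
      (h J (Finset.powersetCard_mono (U.erase_subset i) hJ) i hi).not.2 hiJ
    refine (Submodule.smul_mem_iff _ hne).1 ?_
    rw [← addContraction_veronese_sub]
    exact sub_mem (Submodule.mem_sup_left (Submodule.mem_map_of_mem hver))
      (Submodule.mem_sup_right (Submodule.mem_map_of_mem hver))
  refine sup_le (fun v hv => ?_) hlow
  have hv' : v = addContraction ξ v - contraction ξ v := (add_sub_cancel_right v _).symm
  rw [hv']
  exact sub_mem (Submodule.mem_sup_left (Submodule.mem_map_of_mem hv))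
    (hlow (contraction_mem_homogeneousSpace ξ hv))

end Transversality

section Inequality

theorem finrank_map_mkQ_add_finrank_inf {L V : Type*} [Field L] [AddCommGroup V] [Module L V]
    (F R : Submodule L V) [FiniteDimensional L F] :
    Module.finrank L (F.map R.mkQ) + Module.finrank L ↥(F ⊓ R) = Module.finrank L F := by
  rw [← LinearMap.finrank_range_add_finrank_ker (R.mkQ.domRestrict F), LinearMap.range_domRestrict,
    LinearMap.ker_domRestrict, Submodule.ker_mkQ, ← Submodule.finrank_map_subtype_eq,
    Submodule.map_comap_subtype]

variable {K L ι : Type*} [Field K] [Field L] [Algebra K L] {n N : ℕ} {ξ : Fin (n + 1) → L}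
  {ζ : ι → Fin (n + 1) → L} {p : Finset ι → Fin (n + 1) → L} {U : Finset ι}
  {R : Submodule L ((Fin (n + 1) → ℕ) → L)}

theorem IsSpecialization.finrank_map_mkQ_le {m : ℕ} {ξ ζ : Fin m → L}
    {R : Submodule L ((Fin m → ℕ) → L)} [FiniteDimensional L R] (h : IsSpecialization K ξ ζ)
    (hR : IsDefinedOver K R) :
    Module.finrank L ((contractionGraph (N + 1) ζ).map R.mkQ) ≤
      Module.finrank L ((contractionGraph (N + 1) ξ).map R.mkQ) := by
  have hsup := h.finrank_contractionGraph_sup_le (N + 1) hR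
  have hξ := Submodule.finrank_sup_add_finrank_inf_eq (contractionGraph (N + 1) ξ) R
  have hζ := Submodule.finrank_sup_add_finrank_inf_eq (contractionGraph (N + 1) ζ) R
  have hξ' := finrank_map_mkQ_add_finrank_inf (contractionGraph (N + 1) ξ) R
  have hζ' := finrank_map_mkQ_add_finrank_inf (contractionGraph (N + 1) ζ) R
  rw [finrank_contractionGraph] at hξ hζ hξ' hζ'
  omega

theorem IsStarConfiguration.finrank_inf_add_le [FiniteDimensional L R]
    (h : IsStarConfiguration n (fun i => ξ - ζ i) p U) (hU : U.card = N + 1 + n) {i : ι}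
    (hi : i ∈ U) (hζ : IsSpecialization K ξ (ζ i)) (hR : IsDefinedOver K R) :
    Module.finrank L ↥((contractionGraph (N + 1) ξ).map R.mkQ ⊓
        (contractionGraph (N + 1) (ζ i)).map R.mkQ) +
      Module.finrank L ((ambientSpace L (n + 1) N).map R.mkQ) ≤
      2 * Module.finrank L ((contractionGraph (N + 1) ξ).map R.mkQ) := by
  have hsup : Module.finrank L ((ambientSpace L (n + 1) N).map R.mkQ) ≤
      Module.finrank L ↥((contractionGraph (N + 1) ξ).map R.mkQ ⊔
        (contractionGraph (N + 1) (ζ i)).map R.mkQ) := by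
    rw [← Submodule.map_sup]
    exact Submodule.finrank_mono (Submodule.map_mono (h.ambientSpace_le_sup hU hi))
  have hspecial := hζ.finrank_map_mkQ_le (N := N) hR
  have hdim := Submodule.finrank_sup_add_finrank_inf_eq ((contractionGraph (N + 1) ξ).map R.mkQ)
    ((contractionGraph (N + 1) (ζ i)).map R.mkQ)
  omega

/-- The image in the quotient by `R` of the basis vector of `F` attached to the point `p J`. -/
def basisImage (N : ℕ) (ξ : Fin (n + 1) → L) (p : Finset ι → Fin (n + 1) → L)
    (R : Submodule L ((Fin (n + 1) → ℕ) → L)) (J : Finset ι) : ((Fin (n + 1) → ℕ) → L) ⧸ R :=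
  R.mkQ (addContraction ξ (veronese (N + 1) (p J)))

theorem IsStarConfiguration.span_basisImage {η : ι → Fin (n + 1) → L}
    (h : IsStarConfiguration n η p U) (hU : U.card = N + 1 + n) :
    Submodule.span L (basisImage N ξ p R '' (U.powersetCard n : Set (Finset ι))) =
      (contractionGraph (N + 1) ξ).map R.mkQ := by
  rw [← h.span_addContraction_veronese hU, Submodule.map_span, Set.image_image]
  rfl

theorem IsStarConfiguration.sum_finrank_add_le [FiniteDimensional L R]
    (h : IsStarConfiguration n (fun i => ξ - ζ i) p U) (hU : U.card = N + 1 + n)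
    (hζ : ∀ i, IsSpecialization K ξ (ζ i)) (hR : IsDefinedOver K R) :
    ∑ i ∈ U, Module.finrank L (Submodule.span L
        (basisImage N ξ p R '' {J ∈ U.powersetCard n | i ∈ J})) +
      (N + 1 + n) * Module.finrank L ((ambientSpace L (n + 1) N).map R.mkQ) ≤
      (N + 1 + n) * (2 * Module.finrank L ((contractionGraph (N + 1) ξ).map R.mkQ)) := by
  rw [← hU, ← smul_eq_mul, ← smul_eq_mul, ← Finset.sum_const, ← Finset.sum_const,
    ← Finset.sum_add_distrib]
  refine Finset.sum_le_sum fun i hi => le_trans ?_ (h.finrank_inf_add_le hU hi (hζ i) hR)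
  refine Nat.add_le_add_right (Submodule.finrank_mono (Submodule.span_le.2 ?_)) _
  rintro _ ⟨J, ⟨hJ, hiJ⟩, rfl⟩
  exact Submodule.map_inf_le _
    (Submodule.mem_map_of_mem (h.addContraction_veronese_mem_inf hJ hiJ))

theorem add_one_mul_finrank_homogeneousSpace (n N : ℕ) :
    (N + 1) * Module.finrank L (homogeneousSpace L (n + 1) (N + 1)) =
      (N + 1 + n) * Module.finrank L (homogeneousSpace L (n + 1) N) := by
  rw [finrank_homogeneousSpace, finrank_homogeneousSpace, ← Nat.choose_symm_add,
    ← Nat.choose_symm_add, show N + 1 + n = N + n + 1 by omega,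
    Nat.add_one_mul_choose_eq, mul_comm]

theorem mul_finrank_ambientSpace (ξ : Fin (n + 1) → L) (N : ℕ) :
    (N + 1 + n) * Module.finrank L (ambientSpace L (n + 1) N) =
      (2 * (N + 1) + n) * Module.finrank L (contractionGraph (N + 1) ξ) := by
  have hsup := Submodule.finrank_sup_add_finrank_inf_eq
    (homogeneousSpace L (n + 1) (N + 1)) (homogeneousSpace L (n + 1) N)
  rw [(disjoint_homogeneousSpace N.succ_ne_self).eq_bot, finrank_bot, add_zero] at hsup
  rw [hsup, mul_add, ← add_one_mul_finrank_homogeneousSpace, finrank_contractionGraph]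
  ring

theorem mul_finrank_add_mul_finrank_map_mkQ (ξ : Fin (n + 1) → L)
    (hRle : R ≤ ambientSpace L (n + 1) N) :
    (N + 1 + n) * Module.finrank L R +
        (N + 1 + n) * Module.finrank L ((ambientSpace L (n + 1) N).map R.mkQ) =
      (2 * (N + 1) + n) * Module.finrank L ↥(contractionGraph (N + 1) ξ ⊓ R) +
        (2 * (N + 1) + n) * Module.finrank L ((contractionGraph (N + 1) ξ).map R.mkQ) := by
  have hambient := finrank_map_mkQ_add_finrank_inf (ambientSpace L (n + 1) N) R
  rw [inf_eq_right.2 hRle] at hambient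
  rw [← mul_add, ← mul_add, add_comm (Module.finrank L R), hambient, mul_finrank_ambientSpace ξ,
    add_comm (Module.finrank L ↥(_ ⊓ R)), finrank_map_mkQ_add_finrank_inf]

theorem IsStarConfiguration.mul_finrank_inf_le
    (h : IsStarConfiguration n (fun i => ξ - ζ i) p U) (hU : U.card = N + 1 + n)
    (hζ : ∀ i, IsSpecialization K ξ (ζ i)) (hR : IsDefinedOver K R)
    (hRle : R ≤ ambientSpace L (n + 1) N) :
    (2 * (N + 1) + n) * Module.finrank L ↥(contractionGraph (N + 1) ξ ⊓ R) ≤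
      (N + 1 + n) * Module.finrank L R := by
  have := Submodule.finiteDimensional_of_le hRle
  have hshearer := mul_finrank_span_le_sum_finrank_span (L := L) (basisImage N ξ p R)
    (subset_refl (U.powersetCard n))
  rw [h.span_basisImage hU] at hshearer
  have hsum := h.sum_finrank_add_le hU hζ hR
  have hbalance := mul_finrank_add_mul_finrank_map_mkQ ξ hRle
  linarith

end Inequality

section Equality

theorem mem_span_image_sep_of_map_eq_zero {L V W α : Type*} [Field L] [AddCommGroup V] [Module L V]
    [AddCommGroup W] [Module L W] {φ : V →ₗ[L] W} {f : α → V} {X : Set α}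
    (hli : LinearIndepOn L (φ ∘ f) {x ∈ X | φ (f x) ≠ 0}) {v : V}
    (hv : v ∈ Submodule.span L (f '' X)) (hφv : φ v = 0) :
    v ∈ Submodule.span L (f '' {x ∈ X | φ (f x) = 0}) := by
  have hX : X = {x ∈ X | φ (f x) = 0} ∪ {x ∈ X | φ (f x) ≠ 0} := by
    ext x
    simp only [Set.mem_union, Set.mem_ofPred_eq, ← and_or_left, em, and_true]
  rw [hX, Set.image_union, Submodule.span_union] at hv
  obtain ⟨u, hu, w, hw, rfl⟩ := Submodule.mem_sup.1 hv
  have hφu : φ u = 0 := by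
    have hle : Submodule.span L (f '' {x ∈ X | φ (f x) = 0}) ≤ φ.ker :=
      Submodule.span_le.2 (by rintro _ ⟨x, hx, rfl⟩; exact hx.2)
    exact hle hu
  rw [map_add, hφu, zero_add] at hφv
  obtain ⟨l, hl, rfl⟩ := (Finsupp.mem_span_image_iff_linearCombination L).1 hw
  rw [LinearMap.map_finsupp_linearCombination] at hφv
  rwa [linearIndepOn_iff.1 hli l hl hφv, map_zero, add_zero]

theorem forall_mem_powersetCard_of_exchange {ι : Type*} [DecidableEq ι] {A : Finset ι} {n : ℕ}
    {P : Finset ι → Prop}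
    (hP : ∀ J ∈ A.powersetCard n, P J → ∀ i ∈ A \ J, ∀ K ∈ (insert i J).powersetCard n, P K)
    {J : Finset ι} (hJ : J ∈ A.powersetCard n) (hPJ : P J) : ∀ K ∈ A.powersetCard n, P K := by
  intro K hK
  obtain ⟨hKA, hKcard⟩ := Finset.mem_powersetCard.1 hK
  induction hd : (K \ J).card generalizing J with
  | zero =>
    have hKJ : K ⊆ J := Finset.sdiff_eq_empty_iff_subset.1 (Finset.card_eq_zero.1 hd)
    have hJcard := (Finset.mem_powersetCard.1 hJ).2
    rwa [Finset.eq_of_subset_of_card_le hKJ (by omega)]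
  | succ d ih =>
    obtain ⟨hJA, hJcard⟩ := Finset.mem_powersetCard.1 hJ
    obtain ⟨i, hi⟩ : (K \ J).Nonempty := Finset.card_pos.1 (by omega)
    obtain ⟨hiK, hiJ⟩ := Finset.mem_sdiff.1 hi
    obtain ⟨j, hj⟩ : (J \ K).Nonempty := Finset.card_pos.1 (by
      rw [Finset.card_sdiff_comm (hJcard.trans hKcard.symm)]; omega)
    obtain ⟨hjJ, hjK⟩ := Finset.mem_sdiff.1 hj
    have hcard : (insert i (J.erase j)).card = n := by
      rw [Finset.card_insert_of_notMem (fun h => hiJ (Finset.mem_of_mem_erase h)),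
        Finset.card_erase_add_one hjJ, hJcard]
    have hsub : insert i (J.erase j) ⊆ insert i J :=
      Finset.insert_subset_insert i (J.erase_subset j)
    refine ih (J := insert i (J.erase j)) ?_ ?_ ?_
    · exact Finset.mem_powersetCard.2 ⟨hsub.trans (Finset.insert_subset (hKA hiK) hJA), hcard⟩
    · exact hP J hJ hPJ i (Finset.mem_sdiff.2 ⟨hKA hiK, hiJ⟩) _
        (Finset.mem_powersetCard.2 ⟨hsub, hcard⟩)
    · have hsdiff : K \ insert i (J.erase j) = (K \ J).erase i := by
        ext x
        simp only [Finset.mem_sdiff, Finset.mem_insert, Finset.mem_erase]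
        grind
      rw [hsdiff, Finset.card_erase_of_mem hi, hd, Nat.add_sub_cancel]

variable {K L ι : Type*} [Field K] [Field L] [Algebra K L] {n N : ℕ} {ξ : Fin (n + 1) → L}
  {ζ : ι → Fin (n + 1) → L} {p : Finset ι → Fin (n + 1) → L} {A U : Finset ι}
  {R : Submodule L ((Fin (n + 1) → ℕ) → L)}

namespace IsStarConfiguration

theorem linearIndepOn_basisImage
    (h : IsStarConfiguration n (fun i => ξ - ζ i) p U) (hU : U.card = N + 1 + n)
    (hζ : ∀ i, IsSpecialization K ξ (ζ i)) (hR : IsDefinedOver K R)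
    (hRle : R ≤ ambientSpace L (n + 1) N)
    (heq : (N + 1 + n) * Module.finrank L R =
      (2 * (N + 1) + n) * Module.finrank L ↥(contractionGraph (N + 1) ξ ⊓ R)) :
    LinearIndepOn L (basisImage N ξ p R)
      {J ∈ (U.powersetCard n : Set (Finset ι)) | basisImage N ξ p R J ≠ 0} := by
  have := Submodule.finiteDimensional_of_le hRle
  refine linearIndepOn_ne_zero_of_mul_finrank_span_eq (subset_refl (U.powersetCard n)) ?_
  refine le_antisymm (mul_finrank_span_le_sum_finrank_span _ subset_rfl) ?_
  rw [h.span_basisImage hU]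
  have hsum := h.sum_finrank_add_le hU hζ hR
  have hbalance := mul_finrank_add_mul_finrank_map_mkQ ξ hRle
  linarith

theorem inf_le_span {η : ι → Fin (n + 1) → L} (h : IsStarConfiguration n η p U)
    (hU : U.card = N + 1 + n)
    (hli : LinearIndepOn L (basisImage N ξ p R)
      {J ∈ (U.powersetCard n : Set (Finset ι)) | basisImage N ξ p R J ≠ 0}) :
    contractionGraph (N + 1) ξ ⊓ R ≤ Submodule.span L
      ((fun J => addContraction ξ (veronese (N + 1) (p J))) ''
        {J ∈ (U.powersetCard n : Set (Finset ι)) | basisImage N ξ p R J = 0}) := by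
  rintro v ⟨hvF, hvR⟩
  rw [← h.span_addContraction_veronese hU] at hvF
  exact mem_span_image_sep_of_map_eq_zero hli hvF ((Submodule.Quotient.mk_eq_zero R).2 hvR)

theorem inf_le_ker_pairing_formProd [DecidableEq ι] {η : ι → Fin (n + 1) → L}
    (h : IsStarConfiguration n η p U) (hU : U.card = N + 1 + n)
    (hli : LinearIndepOn L (basisImage N ξ p R)
      {J ∈ (U.powersetCard n : Set (Finset ι)) | basisImage N ξ p R J ≠ 0})
    {J : Finset ι} (hJ : J ∈ U.powersetCard n) (hJR : basisImage N ξ p R J ≠ 0) :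
    contractionGraph (N + 1) ξ ⊓ R ≤ (pairing (formProd η (U \ J))).ker := by
  refine (h.inf_le_span hU hli).trans (Submodule.span_le.2 ?_)
  rintro _ ⟨I, ⟨hI, hIR⟩, rfl⟩
  have hhom := card_sdiff_of_mem_powersetCard hU hJ ▸ isHomogeneous_formProd η (U \ J)
  refine (pairing_addContraction_veronese ξ hhom _).trans (not_not.1 ?_)
  rw [← ne_eq, h.eval_formProd_sdiff_ne_zero_iff hJ hI]
  rintro rfl
  exact hJR hIR

-- The product of the forms `η k` over `k ∈ A \ insert i J` vanishes on `F ∩ R`, but it does not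
-- vanish at `p I` when `I ⊆ insert i J`.
theorem basisImage_ne_zero_of_subset_insert [DecidableEq ι] {η : ι → Fin (n + 1) → L}
    (h : IsStarConfiguration n η p A) (hA : A.card = N + 1 + n + 1)
    {J : Finset ι} (hJ : J ∈ A.powersetCard n) (hJR : basisImage N ξ p R J ≠ 0)
    {i : ι} (hi : i ∈ A \ J)
    (hli : LinearIndepOn L (basisImage N ξ p R)
      {J ∈ ((A.erase i).powersetCard n : Set (Finset ι)) | basisImage N ξ p R J ≠ 0})
    {I : Finset ι} (hI : I ∈ (insert i J).powersetCard n) : basisImage N ξ p R I ≠ 0 := by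
  obtain ⟨hiA, hiJ⟩ := Finset.mem_sdiff.1 hi
  obtain ⟨hJA, hJcard⟩ := Finset.mem_powersetCard.1 hJ
  obtain ⟨hIiJ, hIcard⟩ := Finset.mem_powersetCard.1 hI
  have hU : (A.erase i).card = N + 1 + n := by rw [Finset.card_erase_of_mem hiA, hA]; rfl
  have hJU : J ∈ (A.erase i).powersetCard n :=
    Finset.mem_powersetCard.2 ⟨Finset.subset_erase.2 ⟨hJA, hiJ⟩, hJcard⟩
  have hIA : I ∈ A.powersetCard n :=
    Finset.mem_powersetCard.2 ⟨hIiJ.trans (Finset.insert_subset hiA hJA), hIcard⟩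
  have hdisj : Disjoint (A.erase i \ J) I := by
    refine Finset.disjoint_of_subset_right hIiJ (Finset.disjoint_left.2 fun k hk => ?_)
    simp only [Finset.mem_sdiff, Finset.mem_erase] at hk
    simp [hk]
  intro hIR
  have hzero := (h.mono (A.erase_subset i)).inf_le_ker_pairing_formProd hU hli hJU hJR
    ⟨Submodule.mem_map_of_mem (veronese_mem_homogeneousSpace _ (p I)),
      (Submodule.Quotient.mk_eq_zero R).1 hIR⟩
  rw [LinearMap.mem_ker, pairing_addContraction_veronese ξ
    (card_sdiff_of_mem_powersetCard hU hJU ▸ isHomogeneous_formProd η _)] at hzero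
  exact (h.eval_formProd_ne_zero_iff
    (Finset.sdiff_subset.trans (A.erase_subset i)) hIA).2 hdisj hzero

theorem eq_bot_or_eq_ambientSpace
    (h : IsStarConfiguration n (fun i => ξ - ζ i) p A) (hA : A.card = N + 1 + n + 1)
    (hζ : ∀ i, IsSpecialization K ξ (ζ i)) (hR : IsDefinedOver K R)
    (hRle : R ≤ ambientSpace L (n + 1) N)
    (heq : (N + 1 + n) * Module.finrank L R =
      (2 * (N + 1) + n) * Module.finrank L ↥(contractionGraph (N + 1) ξ ⊓ R)) :
    R = ⊥ ∨ R = ambientSpace L (n + 1) N := by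
  classical
  have := Submodule.finiteDimensional_of_le hRle
  obtain ⟨U, hUA, hU⟩ := Finset.exists_subset_card_eq (show N + 1 + n ≤ A.card by omega)
  have hstar := h.mono hUA
  have hli {U : Finset ι} (hUA : U ⊆ A) (hU : U.card = N + 1 + n) :=
    (h.mono hUA).linearIndepOn_basisImage hU hζ hR hRle heq
  by_cases hall : ∀ J ∈ A.powersetCard n, basisImage N ξ p R J = 0
  · right
    have hF : contractionGraph (N + 1) ξ ≤ R := by
      rw [← hstar.span_addContraction_veronese hU, Submodule.span_le]
      rintro _ ⟨J, hJ, rfl⟩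
      exact (Submodule.Quotient.mk_eq_zero R).1 (hall J (Finset.powersetCard_mono hUA hJ))
    rw [inf_eq_left.2 hF, ← mul_finrank_ambientSpace] at heq
    exact Submodule.eq_of_le_of_finrank_eq hRle (Nat.eq_of_mul_eq_mul_left (by omega) heq)
  · left
    push Not at hall
    obtain ⟨J₀, hJ₀, hJ₀R⟩ := hall
    have hnone : ∀ J ∈ A.powersetCard n, basisImage N ξ p R J ≠ 0 :=
      forall_mem_powersetCard_of_exchange (fun J hJ hJR i hi I hI =>
        h.basisImage_ne_zero_of_subset_insert hA hJ hJR hi (hli (A.erase_subset i)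
          (by rw [Finset.card_erase_of_mem (Finset.mem_sdiff.1 hi).1, hA]; rfl)) hI) hJ₀ hJ₀R
    have hinf : contractionGraph (N + 1) ξ ⊓ R = ⊥ := by
      have hempty : {J ∈ (U.powersetCard n : Set (Finset ι)) | basisImage N ξ p R J = 0} = ∅ :=
        Set.eq_empty_of_forall_notMem fun J hJ => hnone J (Finset.powersetCard_mono hUA hJ.1) hJ.2
      have hle := hstar.inf_le_span hU (hli hUA hU)
      rwa [hempty, Set.image_empty, Submodule.span_empty, le_bot_iff] at hle
    rw [hinf, finrank_bot, mul_zero, Nat.mul_eq_zero] at heq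
    exact Submodule.finrank_eq_zero.1 (heq.resolve_left (by omega))

end IsStarConfiguration

end Equality

section Main

variable {K L : Type*} [Field K] [IsAlgClosed K] [Field L] [Algebra K L]

theorem exists_isSpecialization_isStarConfiguration {n : ℕ} {ξ : Fin (n + 1) → L}
    (hξ : LinearIndependent K (Fin.cons 1 ξ : Fin (n + 2) → L)) {ι : Type*} (A : Finset ι) :
    ∃ ζ : ι → Fin (n + 1) → L, (∀ i, IsSpecialization K ξ (ζ i)) ∧
      ∃ p, IsStarConfiguration n (fun i => ξ - ζ i) p A := by
  obtain ⟨η, hηT, hη⟩ := exists_inGeneralPosition (L := L)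
    (T := {η | ∃ ζ, IsSpecialization K ξ ζ ∧ ξ - ζ = η})
    (fun 𝒰 h𝒰 => by
      obtain ⟨ζ, hζ, hζ𝒰⟩ := exists_isSpecialization_forall_sub_notMem hξ 𝒰 h𝒰
      exact ⟨ξ - ζ, ⟨ζ, hζ, rfl⟩, hζ𝒰⟩) A
  choose ζ hζ hζη using hηT
  obtain rfl : (fun i => ξ - ζ i) = η := funext hζη
  exact ⟨ζ, hζ, hη.exists_isStarConfiguration⟩

theorem mul_finrank_inf_le_and_eq_iff {n N : ℕ} {ξ : Fin (n + 1) → L}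
    (hξ : LinearIndependent K (Fin.cons 1 ξ : Fin (n + 2) → L))
    {R : Submodule L ((Fin (n + 1) → ℕ) → L)} (hRle : R ≤ ambientSpace L (n + 1) N)
    (hR : IsDefinedOver K R) :
    (2 * (N + 1) + n) * Module.finrank L ↥(contractionGraph (N + 1) ξ ⊓ R) ≤
      (N + 1 + n) * Module.finrank L R ∧
    ((N + 1 + n) * Module.finrank L R =
      (2 * (N + 1) + n) * Module.finrank L ↥(contractionGraph (N + 1) ξ ⊓ R) ↔
      R = ⊥ ∨ R = ambientSpace L (n + 1) N) := by
  obtain ⟨ζ, hζ, p, hstar⟩ :=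
    exists_isSpecialization_isStarConfiguration hξ (Finset.range (N + 1 + n + 1))
  refine ⟨(hstar.mono (Finset.range_subset_range.2 (Nat.le_succ _))).mul_finrank_inf_le
    (Finset.card_range _) hζ hR hRle, ?_, ?_⟩
  · exact hstar.eq_bot_or_eq_ambientSpace (Finset.card_range _) hζ hR hRle
  · rintro (rfl | rfl)
    · simp
    · rw [inf_eq_left.2 (contractionGraph_le ξ N), mul_finrank_ambientSpace]

theorem dimension_inequality_for_algebraic_subspaces_general {m N : ℕ} (hm : 1 ≤ m) (hN : 1 ≤ N)
    {ξ : Fin m → L} (hξ : LinearIndependent K (Fin.cons 1 ξ : Fin (m + 1) → L))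
    {R : Submodule L ((Fin m → ℕ) → L)}
    (hRle : R ≤ homogeneousSpace L m N ⊔ homogeneousSpace L m (N - 1))
    (hR : IsDefinedOver K R) :
    (2 - ((m : ℝ) - 1) / ((N : ℝ) + (m : ℝ) - 1)) *
        (Module.finrank L ↥(contractionGraph N ξ ⊓ R) : ℝ) ≤ (Module.finrank L R : ℝ) ∧
    ((Module.finrank L R : ℝ) =
        (2 - ((m : ℝ) - 1) / ((N : ℝ) + (m : ℝ) - 1)) *
          (Module.finrank L ↥(contractionGraph N ξ ⊓ R) : ℝ) ↔
      R = ⊥ ∨ R = homogeneousSpace L m N ⊔ homogeneousSpace L m (N - 1)) := by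
  obtain ⟨n, rfl⟩ := Nat.exists_eq_add_of_le' hm
  obtain ⟨k, rfl⟩ := Nat.exists_eq_add_of_le' hN
  obtain ⟨hle, heq⟩ := mul_finrank_inf_le_and_eq_iff hξ hRle hR
  have hpos : (0 : ℝ) < (k + 1 + n : ℕ) := by positivity
  have hcoeff : 2 - (((n + 1 : ℕ) : ℝ) - 1) / (((k + 1 : ℕ) : ℝ) + ((n + 1 : ℕ) : ℝ) - 1) =
      (2 * (k + 1) + n : ℕ) / (k + 1 + n : ℕ) := by
    have hden : ((k + 1 : ℕ) : ℝ) + ((n + 1 : ℕ) : ℝ) - 1 = (k + 1 + n : ℕ) := by push_cast; ring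
    rw [hden, eq_div_iff hpos.ne', sub_mul, div_mul_cancel₀ _ hpos.ne']
    push_cast
    ring
  rw [hcoeff, div_mul_eq_mul_div, div_le_iff₀ hpos, eq_div_iff hpos.ne',
    mul_comm (Module.finrank L R : ℝ)]
  exact_mod_cast And.intro hle heq

end Main

section Complex

theorem Evec_eq_single {m : ℕ} (κ : Fin m → ℕ) : Evec κ = Pi.single κ 1 := by
  ext μ
  simp [Evec, Pi.single_apply]

theorem eq_add_single_iff {m : ℕ} {κ μ : Fin m → ℕ} {j : Fin m} :
    μ + Pi.single j 1 = κ ↔ κ j ≠ 0 ∧ μ = sub1 κ j := by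
  constructor
  · rintro rfl
    refine ⟨by simp, funext fun i => ?_⟩
    rcases eq_or_ne i j with rfl | hij <;> simp [sub1, *]
  · rintro ⟨hκ, rfl⟩
    ext i
    rcases eq_or_ne i j with rfl | hij
    · simp [sub1, Nat.sub_add_cancel (Nat.one_le_iff_ne_zero.2 hκ)]
    · simp [sub1, hij]

theorem Zvec_eq_addContraction {m : ℕ} (ξ : Fin m → ℂ) (κ : Fin m → ℕ) :
    Zvec ξ κ = addContraction ξ (Pi.single κ 1) := by
  rw [Zvec, Evec_eq_single, addContraction, LinearMap.add_apply, LinearMap.id_apply]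
  congr 1
  ext μ
  rw [Finset.sum_apply, contraction_apply]
  refine Finset.sum_congr rfl fun j _ => ?_
  by_cases hκ : κ j = 0 <;> simp [hκ, Pi.single_apply, eq_add_single_iff, Evec]

theorem Fspace_eq_contractionGraph (m N : ℕ) (ξ : Fin m → ℂ) :
    Fspace m N ξ = contractionGraph N ξ := by
  rw [contractionGraph_eq_span, Fspace]
  congr 1
  ext v
  simp [Zvec_eq_addContraction, wt, eq_comm]

theorem OmegaSpace_eq_sup (m N : ℕ) :
    OmegaSpace m N = homogeneousSpace ℂ m N ⊔ homogeneousSpace ℂ m (N - 1) := by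
  rw [homogeneousSpace_eq_span, homogeneousSpace_eq_span, ← Submodule.span_union,
    ← Set.image_union, OmegaSpace]
  congr 1
  ext v
  have homega (κ : Fin m → ℕ) : inOmega m N κ ↔ ∑ j, κ j = N ∨ ∑ j, κ j = N - 1 := by
    unfold inOmega wt
    omega
  simp [homega, Evec_eq_single, eq_comm]

instance : IsAlgClosed (algebraicClosure ℚ ℂ) :=
  (algebraicClosure.isAlgClosure ℚ ℂ).isAlgClosed

theorem DefinedOverQbar.isDefinedOver {m : ℕ} {R : Submodule ℂ ((Fin m → ℕ) → ℂ)}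
    (hR : DefinedOverQbar R) : IsDefinedOver (algebraicClosure ℚ ℂ) R := by
  obtain ⟨s, hs, hspan⟩ := hR
  exact ⟨s, fun v hv κ => ⟨⟨v κ, mem_algebraicClosure_iff.2 (hs v hv κ)⟩, rfl⟩, hspan⟩

theorem LinIndepOverQbar.linearIndependent {m : ℕ} {ξ : Fin m → ℂ} (hξ : LinIndepOverQbar m ξ) :
    LinearIndependent (algebraicClosure ℚ ℂ) (Fin.cons 1 ξ : Fin (m + 1) → ℂ) := by
  refine Fintype.linearIndependent_iff.2 fun c hc => ?_
  have hzero := hξ (c 0) (fun j => c j.succ) (mem_algebraicClosure_iff.1 (c 0).2)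
    (fun j => mem_algebraicClosure_iff.1 (c j.succ).2)
    (by simpa [Fin.sum_univ_succ, Algebra.smul_def] using hc)
  exact Fin.cases (Subtype.ext hzero.1) fun j => Subtype.ext (hzero.2 j)

end Complex

/-- **Theorem 5.1 (non-degeneracy).** Let `m, N ≥ 1` and let `ξ₁, …, ξ_m ∈ ℂ` be such
that `1, ξ₁, …, ξ_m` are linearly independent over `ℚ̄`. Let `R` be a subspace of `ℂ^Ω`
defined over `ℚ̄`. Then `dim R ≥ (2 - (m-1)/(N+m-1)) · dim(F ∩ R)`, and equality holds
if and only if `R = {0}` or `R = ℂ^Ω`. -/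
theorem dimension_inequality_for_algebraic_subspaces
    (m N : ℕ) (hm : 1 ≤ m) (hN : 1 ≤ N) (ξ : Fin m → ℂ)
    (hξ : LinIndepOverQbar m ξ)
    (R : Submodule ℂ ((Fin m → ℕ) → ℂ)) (hR : R ≤ OmegaSpace m N)
    (hRalg : DefinedOverQbar R) :
    (2 - ((m : ℝ) - 1) / ((N : ℝ) + (m : ℝ) - 1)) *
        (Module.finrank ℂ ↥(Fspace m N ξ ⊓ R) : ℝ) ≤ (Module.finrank ℂ ↥R : ℝ) ∧
    ((Module.finrank ℂ ↥R : ℝ) =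
        (2 - ((m : ℝ) - 1) / ((N : ℝ) + (m : ℝ) - 1)) *
          (Module.finrank ℂ ↥(Fspace m N ξ ⊓ R) : ℝ) ↔
      R = ⊥ ∨ R = OmegaSpace m N) := by
  rw [OmegaSpace_eq_sup] at hR ⊢
  rw [Fspace_eq_contractionGraph]
  exact dimension_inequality_for_algebraic_subspaces_general hm hN hξ.linearIndependent hR
    hRalg.isDefinedOver
end
end
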